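/- There exist constants ε₀ = ε₀(n, λ, V₀) > 0 and r₀ = r₀(n, λ, Λ, V₀) > 0 such that if the smallness condition holds with parameter ε₀ and u is an ancient solution of ∂ₜu = Lu on ℝ⁻ × Ω vanishing on ℝ⁻ × ∂Ω that is not identically zero, then liminf_{R → ∞} R⁻¹ log(∫_{Q_R} u²) ≥ 1/r₀. -/

import Mathlib

/-!
Let `ε₀` be small and replace `u` by `v = ± e^{-ε₀ t} u`, a solution of the equation with
`c - ε₀ ≤ 0` in place of `c`, the sign being chosen so that `v(t₀, x) > 0` at some point. Fix
`0 < σ < v(t₀, x)` and a smooth convex truncation `ψ` vanishing on `(-∞, σ]`. Since `v` vanishes on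
the boundary, `ψ(v(t))` vanishes near `∂Ω`, so no regularity of `∂Ω` is needed to extend it by zero
and integrate by parts.

The energy is `J(t) = ∫ η² ψ(v(t))²` with the cutoff `η(x₀) = (1/cosh(δx₀) - 1/cosh(δR))₊`, which is
supported in `|x₀| ≤ R` and satisfies `|η'| ≤ δ (η + 1/cosh(δR))`. A Poincaré inequality in the
cross-section (`poincare`), with constant depending only on `n` and `V₀` and proved by averaging
over translations, turns the usual energy estimate (`energy_static`) into
`J' ≤ -K J + K cosh(δR)⁻² ∫_{D_R} v²`
with `K` depending only on `n, lam, V₀`, and `δ` also on `Lam`. Multiplying by the weight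
`e^{Kt} - e^{-KR²}`, which is zero at `t = -R²`, and integrating up to `t₀` (`growth_bound`) gives
`(e^{Kt₀} - e^{-KR²}) J(t₀) ≤ K (e^{-KR²/2} + cosh(δR)⁻²) ∫_{Q_R} u²`.
The left side is bounded below as `R → ∞` and the bracket on the right is at most `5 e^{-2δR}`, so
`∫_{Q_R} u² ≥ C e^{2δR}`; the statement follows with `r₀ = 1/δ`.

Differentiating `J` needs some care because `∂ₜu` is only assumed to exist pointwise. The maximum
principle yields Lipschitz bounds forward in time on compact subsets of the strip
(`forward_lipschitz`), and these dominate the difference quotients of `J` from the right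
(`hasDerivWithinAt_energy`), which is enough for the differential inequality.
-/

open MeasureTheory Set Filter

noncomputable section

/-- Partial derivative of `f` in the `i`-th coordinate direction. -/
def pd {n : ℕ} (i : Fin (n + 1)) (f : (Fin (n + 1) → ℝ) → ℝ) (x : Fin (n + 1) → ℝ) : ℝ :=
  fderiv ℝ f x (Pi.single i 1)

/-- The divergence-form operator `L u = ∂ᵢ(aᶦʲ ∂ⱼ u) + bⁱ ∂ᵢ u + c u`. -/
def Lop {n : ℕ} (a : (Fin (n + 1) → ℝ) → Fin (n + 1) → Fin (n + 1) → ℝ)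
    (b : (Fin (n + 1) → ℝ) → Fin (n + 1) → ℝ) (c : (Fin (n + 1) → ℝ) → ℝ)
    (f : (Fin (n + 1) → ℝ) → ℝ) (x : Fin (n + 1) → ℝ) : ℝ :=
  (∑ i, pd i (fun y => ∑ j, a y i j * pd j f y) x) + (∑ i, b x i * pd i f x) + c x * f x

/-- The infinite strip `Ω = ℝ × Ω₀ ⊆ ℝ^{n+1}` (first coordinate `x₀` unconstrained). -/
def strip {n : ℕ} (Ω₀ : Set (Fin n → ℝ)) : Set (Fin (n + 1) → ℝ) :=
  {x | (fun i : Fin n => x i.succ) ∈ Ω₀}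

/-- `D_r = (-r, r) × Ω₀`. -/
def Dset {n : ℕ} (Ω₀ : Set (Fin n → ℝ)) (r : ℝ) : Set (Fin (n + 1) → ℝ) :=
  {x | x 0 ∈ Ioo (-r) r ∧ (fun i : Fin n => x i.succ) ∈ Ω₀}

/-- `Q_r = (-r², 0] × D_r`. -/
def Qset {n : ℕ} (Ω₀ : Set (Fin n → ℝ)) (r : ℝ) : Set (ℝ × (Fin (n + 1) → ℝ)) :=
  Ioc (-r ^ 2) 0 ×ˢ Dset Ω₀ r

/-- Ellipticity, boundedness and regularity of the coefficients of `L`. -/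
structure GoodCoeffs {n : ℕ} (Ω₀ : Set (Fin n → ℝ)) (lam Lam : ℝ)
    (a : (Fin (n + 1) → ℝ) → Fin (n + 1) → Fin (n + 1) → ℝ)
    (b : (Fin (n + 1) → ℝ) → Fin (n + 1) → ℝ) (c : (Fin (n + 1) → ℝ) → ℝ) : Prop where
  elliptic : ∀ x ∈ strip Ω₀, ∀ ξ : Fin (n + 1) → ℝ,
    lam * ∑ i, ξ i ^ 2 ≤ ∑ i, ∑ j, a x i j * ξ i * ξ j
  a_bdd : ∀ x ∈ strip Ω₀, ∀ i j, |a x i j| ≤ Lam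
  a_reg : ∀ i j, ContDiffOn ℝ 1 (fun x => a x i j) (strip Ω₀)
  b_bdd : ∃ M, ∀ x ∈ strip Ω₀, ∀ i, |b x i| ≤ M
  c_bdd : ∃ M, ∀ x ∈ strip Ω₀, |c x| ≤ M

/-- The smallness condition with parameter `ε`: `|bⁱ| ≤ √ε` and `c ≤ ε` on `Ω`. -/
def Smallness {n : ℕ} (Ω₀ : Set (Fin n → ℝ))
    (b : (Fin (n + 1) → ℝ) → Fin (n + 1) → ℝ) (c : (Fin (n + 1) → ℝ) → ℝ) (ε : ℝ) : Prop :=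
  ∀ x ∈ strip Ω₀, (∀ i, |b x i| ≤ Real.sqrt ε) ∧ c x ≤ ε

/-- Ancient solution of `∂ₜ u = L u` on `ℝ⁻ × Ω` vanishing on `ℝ⁻ × ∂Ω`:
continuous up to the boundary, `C²` in space, differentiable in time, solving the equation. -/
structure IsAncientSolution {n : ℕ} (Ω₀ : Set (Fin n → ℝ))
    (a : (Fin (n + 1) → ℝ) → Fin (n + 1) → Fin (n + 1) → ℝ)
    (b : (Fin (n + 1) → ℝ) → Fin (n + 1) → ℝ) (c : (Fin (n + 1) → ℝ) → ℝ)
    (u : ℝ → (Fin (n + 1) → ℝ) → ℝ) : Prop where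
  cont : ContinuousOn (fun p : ℝ × (Fin (n + 1) → ℝ) => u p.1 p.2)
    (Iic (0 : ℝ) ×ˢ closure (strip Ω₀))
  space_reg : ∀ t ≤ (0 : ℝ), ContDiffOn ℝ 2 (u t) (strip Ω₀)
  pde : ∀ t ≤ (0 : ℝ), ∀ x ∈ strip Ω₀,
    HasDerivWithinAt (fun s => u s x) (Lop a b c (u t) x) (Iic (0 : ℝ)) t
  bdry : ∀ t ≤ (0 : ℝ), ∀ x ∈ frontier (strip Ω₀), u t x = 0

/-- Membership in `E_d`: an ancient solution with exponential growth of order `d`. -/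
def MemEd {n : ℕ} (Ω₀ : Set (Fin n → ℝ))
    (a : (Fin (n + 1) → ℝ) → Fin (n + 1) → Fin (n + 1) → ℝ)
    (b : (Fin (n + 1) → ℝ) → Fin (n + 1) → ℝ) (c : (Fin (n + 1) → ℝ) → ℝ)
    (d : ℝ) (u : ℝ → (Fin (n + 1) → ℝ) → ℝ) : Prop :=
  IsAncientSolution Ω₀ a b c u ∧
  ∃ C > (0 : ℝ), ∀ t ≤ (0 : ℝ), ∀ x ∈ strip Ω₀,
    |u t x| ≤ C * Real.exp (d * (Real.sqrt (∑ i, x i ^ 2) + Real.sqrt |t|))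

/-! ### Calculus for `L` and comparison at a touching point -/

lemma pd_add {n : ℕ} {i : Fin (n + 1)} {f g : (Fin (n + 1) → ℝ) → ℝ} {x : Fin (n + 1) → ℝ}
    (hf : DifferentiableAt ℝ f x) (hg : DifferentiableAt ℝ g x) :
    pd i (fun y => f y + g y) x = pd i f x + pd i g x := by
  simp only [pd]
  rw [fderiv_fun_add hf hg]; rfl

lemma pd_mul {n : ℕ} {i : Fin (n + 1)} {f g : (Fin (n + 1) → ℝ) → ℝ} {x : Fin (n + 1) → ℝ}
    (hf : DifferentiableAt ℝ f x) (hg : DifferentiableAt ℝ g x) :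
    pd i (fun y => f y * g y) x = f x * pd i g x + pd i f x * g x := by
  simp only [pd]
  rw [fderiv_fun_mul hf hg]
  simp [mul_comm]

lemma pd_sum {n : ℕ} {i : Fin (n + 1)} {f : Fin (n + 1) → (Fin (n + 1) → ℝ) → ℝ}
    {x : Fin (n + 1) → ℝ} (hf : ∀ j, DifferentiableAt ℝ (f j) x) :
    pd i (fun y => ∑ j, f j y) x = ∑ j, pd i (f j) x := by
  simp only [pd]
  rw [fderiv_fun_sum (fun j _ => hf j)]
  simp

lemma pd_congr {n : ℕ} {i : Fin (n + 1)} {f g : (Fin (n + 1) → ℝ) → ℝ} {x : Fin (n + 1) → ℝ}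
    (h : f =ᶠ[nhds x] g) : pd i f x = pd i g x := by
  simp only [pd]
  rw [h.fderiv_eq]

lemma contDiffAt_pd {n : ℕ} {i : Fin (n + 1)} {f : (Fin (n + 1) → ℝ) → ℝ}
    {x : Fin (n + 1) → ℝ} {m k : ℕ∞} (hf : ContDiffAt ℝ m f x) (hk : (k : WithTop ℕ∞) + 1 ≤ m) :
    ContDiffAt ℝ k (pd i f) x :=
  (hf.fderiv_right hk).clm_apply contDiffAt_const

lemma fderiv_eq_sum_pd {n : ℕ} (f : (Fin (n + 1) → ℝ) → ℝ) (x v : Fin (n + 1) → ℝ) :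
    fderiv ℝ f x v = ∑ i, v i * pd i f x := by
  conv_lhs => rw [pi_eq_sum_univ' v]
  simp [pd]

/-- Product-rule expansion of `L f` for `C²` functions and `C¹` coefficients. -/
lemma Lop_expand {n : ℕ} {a : (Fin (n + 1) → ℝ) → Fin (n + 1) → Fin (n + 1) → ℝ}
    {b : (Fin (n + 1) → ℝ) → Fin (n + 1) → ℝ} {c : (Fin (n + 1) → ℝ) → ℝ}
    {f : (Fin (n + 1) → ℝ) → ℝ} {x : Fin (n + 1) → ℝ}
    (ha : ∀ i j, ContDiffAt ℝ 1 (fun y => a y i j) x) (hf : ContDiffAt ℝ 2 f x) :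
    Lop a b c f x = (∑ i, ∑ j, (a x i j * pd i (pd j f) x + pd i (fun y => a y i j) x * pd j f x))
      + (∑ i, b x i * pd i f x) + c x * f x := by
  have h1 : ∀ j, DifferentiableAt ℝ (pd j f) x := fun j =>
    (contDiffAt_pd (m := 2) (k := 1) hf (by norm_num)).differentiableAt (by norm_num)
  have h2 : ∀ i j, DifferentiableAt ℝ (fun y => a y i j) x := fun i j =>
    (ha i j).differentiableAt (by norm_num)
  simp only [Lop]
  congr 2
  refine Finset.sum_congr rfl fun i _ => ?_
  rw [pd_sum (f := fun j y => a y i j * pd j f y) (fun j => (h2 i j).mul (h1 j))]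
  exact Finset.sum_congr rfl fun j _ => pd_mul (h2 i j) (h1 j)

lemma Lop_add {n : ℕ} {a : (Fin (n + 1) → ℝ) → Fin (n + 1) → Fin (n + 1) → ℝ}
    {b : (Fin (n + 1) → ℝ) → Fin (n + 1) → ℝ} {c : (Fin (n + 1) → ℝ) → ℝ}
    {f g : (Fin (n + 1) → ℝ) → ℝ} {x : Fin (n + 1) → ℝ}
    (ha : ∀ i j, ContDiffAt ℝ 1 (fun y => a y i j) x) (hf : ContDiffAt ℝ 2 f x)
    (hg : ContDiffAt ℝ 2 g x) :
    Lop a b c (fun y => f y + g y) x = Lop a b c f x + Lop a b c g x := by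
  have e1 : ∀ j, pd j (fun y => f y + g y) =ᶠ[nhds x] fun y => pd j f y + pd j g y := fun j => by
    filter_upwards [hf.eventually (by simp), hg.eventually (by simp)] with y h1 h2
    exact pd_add (h1.differentiableAt (by norm_num)) (h2.differentiableAt (by norm_num))
  have d : ∀ {f : (Fin (n + 1) → ℝ) → ℝ}, ContDiffAt ℝ 2 f x → ∀ j,
      DifferentiableAt ℝ (pd j f) x := fun hf j =>
    (contDiffAt_pd (m := 2) (k := 1) hf (by norm_num)).differentiableAt (by norm_num)
  rw [Lop_expand ha (hf.add hg), Lop_expand ha hf, Lop_expand ha hg]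
  have e2 : ∀ i j, pd i (pd j (fun y => f y + g y)) x = pd i (pd j f) x + pd i (pd j g) x :=
    fun i j => by rw [pd_congr (e1 j), pd_add (d hf j) (d hg j)]
  have e3 : ∀ j, pd j (fun y => f y + g y) x = pd j f x + pd j g x := fun j => (e1 j).self_of_nhds
  simp only [e2, e3, mul_add, Finset.sum_add_distrib]
  ring

lemma Lop_const_mul {n : ℕ} {a : (Fin (n + 1) → ℝ) → Fin (n + 1) → Fin (n + 1) → ℝ}
    {b : (Fin (n + 1) → ℝ) → Fin (n + 1) → ℝ} {c : (Fin (n + 1) → ℝ) → ℝ}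
    {f : (Fin (n + 1) → ℝ) → ℝ} {x : Fin (n + 1) → ℝ} (k : ℝ) :
    Lop a b c (fun y => k * f y) x = k * Lop a b c f x := by
  have e : ∀ j (f : (Fin (n + 1) → ℝ) → ℝ), pd j (fun y => k * f y) = fun y => k * pd j f y := by
    intro j f
    funext y
    simp only [pd]
    have := congrFun (fderiv_const_smul_field (𝕜 := ℝ) (f := f) k) y
    have e' : (fun y => k * f y) = k • f := rfl
    rw [e', this]; rfl
  have e1 : ∀ i, (fun y => ∑ j, a y i j * pd j (fun y => k * f y) y)
      = fun y => k * ∑ j, a y i j * pd j f y := by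
    intro i; funext y
    rw [Finset.mul_sum]
    refine Finset.sum_congr rfl fun j _ => ?_
    rw [e]; ring
  have e2 : ∀ i, pd i (fun y => ∑ j, a y i j * pd j (fun y => k * f y) y) x
      = k * pd i (fun y => ∑ j, a y i j * pd j f y) x := by
    intro i; rw [e1, e]
  have e3 : ∀ i, b x i * pd i (fun y => k * f y) x = k * (b x i * pd i f x) := by
    intro i; rw [e]; ring
  simp only [Lop]
  rw [Finset.sum_congr rfl fun i _ => e2 i, Finset.sum_congr rfl fun i _ => e3 i,
    ← Finset.mul_sum, ← Finset.mul_sum]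
  ring

/-- Second-order necessary condition at an interior maximum. -/
lemma hessian_nonpos {n : ℕ} {f : (Fin (n + 1) → ℝ) → ℝ} {x : Fin (n + 1) → ℝ}
    (hf : ContDiffAt ℝ 2 f x) (hmax : IsLocalMax f x) (ξ : Fin (n + 1) → ℝ) :
    ∑ i, ∑ j, ξ i * ξ j * pd i (pd j f) x ≤ 0 := by
  set l : ℝ → Fin (n + 1) → ℝ := fun s => x + s • ξ with hl
  have l0 : l 0 = x := by simp [hl]
  have lc : Continuous l := by fun_prop
  have ld : ∀ s, HasDerivAt l ξ s := fun s => by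
    simpa [hl] using ((hasDerivAt_id s).smul_const ξ).const_add x
  have lt : Tendsto l (nhds 0) (nhds x) := by
    have := lc.tendsto 0; rwa [l0] at this
  have hd1 : deriv (f ∘ l) =ᶠ[nhds 0] fun s => ∑ j, ξ j * pd j f (l s) := by
    filter_upwards [lt.eventually (hf.eventually (by simp))] with s hs
    have h1 : DifferentiableAt ℝ f (l s) := hs.differentiableAt (by norm_num)
    rw [← fderiv_eq_sum_pd]
    exact (h1.hasFDerivAt.comp_hasDerivAt s (ld s)).deriv
  have dpd : ∀ j, DifferentiableAt ℝ (pd j f) (l 0) := fun j => by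
    rw [l0]
    exact (contDiffAt_pd (m := 2) (k := 1) hf (by norm_num)).differentiableAt (by norm_num)
  have hd2 : deriv (deriv (f ∘ l)) 0 = ∑ i, ∑ j, ξ i * ξ j * pd i (pd j f) x := by
    rw [hd1.deriv_eq]
    have h3 : ∀ j, HasDerivAt (fun s => ξ j * pd j f (l s)) (ξ j * ∑ i, ξ i * pd i (pd j f) x) 0 := by
      intro j
      have := ((dpd j).hasFDerivAt.comp_hasDerivAt 0 (ld 0)).const_mul (ξ j)
      rw [fderiv_eq_sum_pd, l0] at this
      exact this
    rw [(HasDerivAt.fun_sum (fun j _ => h3 j)).deriv, Finset.sum_comm]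
    refine Finset.sum_congr rfl fun j _ => ?_
    rw [Finset.mul_sum]
    exact Finset.sum_congr rfl fun i _ => by ring
  have lmax : IsLocalMax (f ∘ l) 0 := by
    have : ∀ᶠ s in nhds (0 : ℝ), f (l s) ≤ f x := lt.eventually hmax
    filter_upwards [this] with s hs
    simpa [l0] using hs
  rw [← hd2]
  by_contra hcon
  push Not at hcon
  have hcont : ContinuousAt (f ∘ l) 0 := by
    apply ContinuousAt.comp _ lc.continuousAt
    rw [l0]; exact hf.continuousAt
  have lmin := isLocalMin_of_deriv_deriv_pos hcon lmax.deriv_eq_zero hcont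
  have hconst : (f ∘ l) =ᶠ[nhds 0] fun _ => (f ∘ l) 0 := by
    filter_upwards [lmax, lmin] with s h1 h2
    exact le_antisymm h1 h2
  have : deriv (deriv (f ∘ l)) 0 = 0 := by
    rw [hconst.deriv.deriv_eq]
    simp
  linarith

lemma pd_pd_symm {n : ℕ} {f : (Fin (n + 1) → ℝ) → ℝ} {x : Fin (n + 1) → ℝ}
    (hf : ContDiffAt ℝ 2 f x) (i j : Fin (n + 1)) : pd i (pd j f) x = pd j (pd i f) x := by
  have hs := hf.isSymmSndFDerivAt (by simp)
  have hd : DifferentiableAt ℝ (fderiv ℝ f) x :=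
    (hf.fderiv_right (m := 1) (by norm_num)).differentiableAt (by norm_num)
  have : ∀ i j, pd i (pd j f) x = fderiv ℝ (fderiv ℝ f) x (Pi.single i 1) (Pi.single j 1) := by
    intro i j
    change fderiv ℝ (fun y => fderiv ℝ f y (Pi.single j 1)) x (Pi.single i 1) = _
    rw [fderiv_clm_apply hd (by fun_prop)]
    simp
  rw [this, this]
  exact hs _ _

open scoped MatrixOrder in
lemma exists_gram {m : ℕ} {S : Matrix (Fin m) (Fin m) ℝ} (hS : S.PosSemidef) :
    ∃ B : Matrix (Fin m) (Fin m) ℝ, S = B.conjTranspose * B := by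
  exact CStarAlgebra.nonneg_iff_eq_star_mul_self.mp hS.nonneg

/-- The trace of the product of a positive and a symmetric negative semidefinite form is
nonpositive; `A` need not be symmetric. -/
lemma trace_nonpos {m : ℕ} {A H : Fin m → Fin m → ℝ}
    (hA : ∀ ξ : Fin m → ℝ, 0 ≤ ∑ i, ∑ j, A i j * ξ i * ξ j)
    (hHs : ∀ i j, H i j = H j i)
    (hH : ∀ ξ : Fin m → ℝ, ∑ i, ∑ j, ξ i * ξ j * H i j ≤ 0) :
    ∑ i, ∑ j, A i j * H i j ≤ 0 := by
  set S : Matrix (Fin m) (Fin m) ℝ := fun i j => (A i j + A j i) / 2 with hS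
  have hSp : S.PosSemidef := by
    refine Matrix.PosSemidef.of_dotProduct_mulVec_nonneg ?_ ?_
    · ext i j; rw [Matrix.conjTranspose_apply]; simp only [hS, star_trivial, add_comm]
    · intro ξ
      have e : star ξ ⬝ᵥ S.mulVec ξ = ∑ i, ∑ j, A i j * ξ i * ξ j := by
        simp only [dotProduct, Matrix.mulVec, Pi.star_apply, star_trivial, Finset.mul_sum, hS]
        have : ∑ i, ∑ j, A i j * ξ i * ξ j = ∑ i, ∑ j, A j i * ξ j * ξ i := Finset.sum_comm
        have h2 : ∀ x y : ℝ, x = y → x = (x + y) / 2 := by intro x y h; linarith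
        rw [h2 _ _ this, ← Finset.sum_add_distrib, Finset.sum_div]
        refine Finset.sum_congr rfl fun i _ => ?_
        rw [← Finset.sum_add_distrib, Finset.sum_div]
        exact Finset.sum_congr rfl fun j _ => by ring
      rw [e]; exact hA ξ
  have e1 : ∑ i, ∑ j, A i j * H i j = ∑ i, ∑ j, S i j * H i j := by
    have : ∑ i, ∑ j, A i j * H i j = ∑ i, ∑ j, A j i * H i j := by
      rw [Finset.sum_comm]
      exact Finset.sum_congr rfl fun i _ => Finset.sum_congr rfl fun j _ => by rw [hHs]
    have h2 : ∀ x y : ℝ, x = y → x = (x + y) / 2 := by intro x y h; linarith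
    rw [h2 _ _ this, ← Finset.sum_add_distrib, Finset.sum_div]
    refine Finset.sum_congr rfl fun i _ => ?_
    rw [← Finset.sum_add_distrib, Finset.sum_div]
    exact Finset.sum_congr rfl fun j _ => by simp only [hS]; ring
  obtain ⟨B, hB⟩ := exists_gram hSp
  have e2 : ∑ i, ∑ j, S i j * H i j = ∑ k, ∑ i, ∑ j, B k i * B k j * H i j := by
    rw [Finset.sum_comm]
    have : ∀ i j, S i j = ∑ k, B k i * B k j := fun i j => by
      rw [hB]; simp [Matrix.mul_apply]
    simp only [this, Finset.sum_mul]
    rw [Finset.sum_comm]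
    rw [Finset.sum_comm (s := Finset.univ) (t := Finset.univ) (f := fun k i => ∑ j, B k i * B k j * H i j)]
    refine Finset.sum_congr rfl fun i _ => ?_
    rw [Finset.sum_comm]
  rw [e1, e2]
  exact Finset.sum_nonpos fun k _ => hH (B k)

/-- Comparison at a touching point: if `f - g` has a local maximum at `x` then
`L f ≤ L g + c (f - g)` there. -/
lemma Lop_le_of_isLocalMax {n : ℕ} {a : (Fin (n + 1) → ℝ) → Fin (n + 1) → Fin (n + 1) → ℝ}
    {b : (Fin (n + 1) → ℝ) → Fin (n + 1) → ℝ} {c : (Fin (n + 1) → ℝ) → ℝ}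
    {f g : (Fin (n + 1) → ℝ) → ℝ} {x : Fin (n + 1) → ℝ}
    (ha : ∀ i j, ContDiffAt ℝ 1 (fun y => a y i j) x)
    (hell : ∀ ξ : Fin (n + 1) → ℝ, 0 ≤ ∑ i, ∑ j, a x i j * ξ i * ξ j)
    (hf : ContDiffAt ℝ 2 f x) (hg : ContDiffAt ℝ 2 g x)
    (hmax : IsLocalMax (fun y => f y - g y) x) :
    Lop a b c f x ≤ Lop a b c g x + c x * (f x - g x) := by
  have hd : ContDiffAt ℝ 2 (fun y => f y - g y) x := hf.sub hg
  have e : Lop a b c f x = Lop a b c g x + Lop a b c (fun y => f y - g y) x := by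
    rw [← Lop_add ha hg hd]
    congr 1; funext y; ring
  have h0 : ∀ i, pd i (fun y => f y - g y) x = 0 := fun i => by
    simp [pd, hmax.fderiv_eq_zero]
  rw [e, Lop_expand ha hd]
  simp only [h0, mul_zero, add_zero, Finset.sum_const_zero]
  have := trace_nonpos (A := a x) (H := fun i j => pd i (pd j (fun y => f y - g y)) x) hell
    (fun i j => pd_pd_symm hd i j) (hessian_nonpos hd hmax)
  linarith

/-! ### Maximum principle and forward Lipschitz bounds -/

lemma isOpen_strip {n : ℕ} {Ω₀ : Set (Fin n → ℝ)} (h : IsOpen Ω₀) : IsOpen (strip Ω₀) :=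
  h.preimage (by fun_prop : Continuous fun x : Fin (n + 1) → ℝ => fun i : Fin n => x i.succ)

/-- `L f` is bounded above on compact sets. As `b` and `c` need not be continuous, they are replaced
by their bounds before compactness is used. -/
lemma Lop_bddOn {n : ℕ} {Ω₀ : Set (Fin n → ℝ)} (hΩ : IsOpen Ω₀) {lam Lam : ℝ}
    {a : (Fin (n + 1) → ℝ) → Fin (n + 1) → Fin (n + 1) → ℝ}
    {b : (Fin (n + 1) → ℝ) → Fin (n + 1) → ℝ} {c : (Fin (n + 1) → ℝ) → ℝ}
    (hg : GoodCoeffs Ω₀ lam Lam a b c) {f : (Fin (n + 1) → ℝ) → ℝ}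
    (hf : ContDiffOn ℝ 2 f (strip Ω₀)) {K : Set (Fin (n + 1) → ℝ)} (hK : IsCompact K)
    (hKs : K ⊆ strip Ω₀) : ∃ M, ∀ x ∈ K, Lop a b c f x ≤ M := by
  have hfx : ∀ x ∈ K, ContDiffAt ℝ 2 f x := fun x hx =>
    hf.contDiffAt ((isOpen_strip hΩ).mem_nhds (hKs hx))
  have hax : ∀ x ∈ K, ∀ i j, ContDiffAt ℝ 1 (fun y => a y i j) x := fun x hx i j =>
    (hg.a_reg i j).contDiffAt ((isOpen_strip hΩ).mem_nhds (hKs hx))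
  have c1 : ∀ j, ContinuousOn (pd j f) K := fun j x hx =>
    (contDiffAt_pd (m := 2) (k := 1) (hfx x hx) (by norm_num)).continuousAt.continuousWithinAt
  have c2 : ∀ i j, ContinuousOn (pd i (pd j f)) K := fun i j x hx =>
    (contDiffAt_pd (m := 1) (k := 0) (contDiffAt_pd (m := 2) (k := 1) (hfx x hx) (by norm_num))
      (by norm_num)).continuousAt.continuousWithinAt
  have c3 : ∀ i j, ContinuousOn (fun y => a y i j) K := fun i j x hx =>
    (hax x hx i j).continuousAt.continuousWithinAt
  have c4 : ∀ i j, ContinuousOn (pd i (fun y => a y i j)) K := fun i j x hx =>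
    (contDiffAt_pd (m := 1) (k := 0) (hax x hx i j) (by norm_num)).continuousAt.continuousWithinAt
  have c5 : ContinuousOn f K := fun x hx => (hfx x hx).continuousAt.continuousWithinAt
  obtain ⟨Mb, hMb⟩ := hg.b_bdd
  obtain ⟨Mc, hMc⟩ := hg.c_bdd
  have C : ContinuousOn (fun x => (∑ i, ∑ j, (a x i j * pd i (pd j f) x
      + pd i (fun y => a y i j) x * pd j f x)) + (∑ i, Mb * |pd i f x|) + Mc * |f x|) K := by
    refine ContinuousOn.add (ContinuousOn.add ?_ ?_) ?_
    · exact continuousOn_finsetSum _ fun i _ => continuousOn_finsetSum _ fun j _ =>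
        ((c3 i j).mul (c2 i j)).add ((c4 i j).mul (c1 j))
    · exact continuousOn_finsetSum _ fun i _ => continuousOn_const.mul (c1 i).abs
    · exact continuousOn_const.mul c5.abs
  obtain ⟨M, hM⟩ := hK.exists_bound_of_continuousOn C
  refine ⟨M, fun x hx => ?_⟩
  rw [Lop_expand (hax x hx) (hfx x hx)]
  refine le_trans ?_ ((le_abs_self _).trans (hM x hx))
  refine add_le_add (add_le_add le_rfl (Finset.sum_le_sum fun i _ => ?_)) ?_
  · exact (le_abs_self _).trans (by rw [abs_mul]; gcongr; exact hMb x (hKs hx) i)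
  · exact (le_abs_self _).trans (by rw [abs_mul]; gcongr; exact hMc x (hKs hx))

/-- One-sided first-order condition, for a maximum over `[t, s]` attained at the endpoint `s`. -/
lemma deriv_nonneg_of_left_max {h : ℝ → ℝ} {h' t s : ℝ} (hts : t < s)
    (hd : HasDerivWithinAt h h' (Iic s) s) (hmax : ∀ r ∈ Icc t s, h r ≤ h s) : 0 ≤ h' := by
  have h1 := hasDerivWithinAt_iff_tendsto_slope.1 hd
  have h2 : Iic s \ {s} = Iio s := by ext r; simp [lt_iff_le_and_ne]
  rw [h2] at h1
  refine ge_of_tendsto h1 ?_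
  filter_upwards [Ioo_mem_nhdsLT hts] with r hr
  rw [slope_def_field]
  exact div_nonneg_of_nonpos (by linarith [hmax r ⟨hr.1.le, hr.2.le⟩]) (by linarith [hr.2])

/-- Forward Lipschitz bound in time, uniform on compact subsets of the strip. It follows from the
maximum principle with the barrier `u(t, ·) + (2M + 1)(1 - χ) + A (s - t)`, where `χ` is a smooth
cutoff equal to `1` on `K`. It supplies the domination needed to differentiate energies, since
`∂ₜ u` is not assumed to be locally bounded. -/
lemma forward_lipschitz {n : ℕ} {Ω₀ : Set (Fin n → ℝ)} (hΩ : IsOpen Ω₀) {lam Lam : ℝ}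
    (hlam : 0 < lam)
    {a : (Fin (n + 1) → ℝ) → Fin (n + 1) → Fin (n + 1) → ℝ}
    {b : (Fin (n + 1) → ℝ) → Fin (n + 1) → ℝ} {c : (Fin (n + 1) → ℝ) → ℝ}
    (hg : GoodCoeffs Ω₀ lam Lam a b c) {u : ℝ → (Fin (n + 1) → ℝ) → ℝ}
    (hu : IsAncientSolution Ω₀ a b c u) {t : ℝ} (ht : t ≤ 0) {K : Set (Fin (n + 1) → ℝ)}
    (hK : IsCompact K) (hKs : K ⊆ strip Ω₀) :
    ∃ C, ∀ x ∈ K, ∀ s ∈ Icc t 0, u s x - u t x ≤ C * (s - t) := by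
  obtain ⟨K', hK', hKK', hK's⟩ := exists_compact_between hK (isOpen_strip hΩ) hKs
  obtain ⟨χ, hχ, hχr, hχs, hχ1⟩ := exists_contMDiff_support_eq_eq_one_iff (n := 2)
    (modelWithCornersSelf ℝ (Fin (n + 1) → ℝ)) (isOpen_interior (s := K')) hK.isClosed hKK'
  have hχd : ContDiff ℝ 2 χ := hχ.contDiff
  have hucont : ContinuousOn (fun p : ℝ × (Fin (n + 1) → ℝ) => u p.1 p.2) (Icc t 0 ×ˢ K') :=
    hu.cont.mono (prod_mono Icc_subset_Iic_self (hK's.trans subset_closure))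
  obtain ⟨M, hM⟩ := (isCompact_Icc.prod hK').exists_bound_of_continuousOn hucont
  have hM' : ∀ s ∈ Icc t 0, ∀ x ∈ K', |u s x| ≤ M := fun s hs x hx => hM (s, x) ⟨hs, hx⟩
  set Φ : (Fin (n + 1) → ℝ) → ℝ := fun x => u t x + (2 * M + 1) * (1 - χ x) with hΦ
  have hΦd : ContDiffOn ℝ 2 Φ (strip Ω₀) :=
    (hu.space_reg t ht).add (contDiffOn_const.mul (contDiffOn_const.sub hχd.contDiffOn))
  obtain ⟨M1, hM1⟩ := Lop_bddOn hΩ hg hΦd hK' hK's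
  obtain ⟨Mc, hMc⟩ := hg.c_bdd
  have χ01 : ∀ y, 0 ≤ χ y ∧ χ y ≤ 1 := fun y => hχr (mem_range_self y)
  set A := |M1| + |Mc| * (4 * M + 1) + 1 with hA
  refine ⟨A, fun x hx s hs => ?_⟩
  have hM0 : 0 ≤ M := (abs_nonneg _).trans (hM' s hs x (interior_subset (hKK' hx)))
  have hA0 : 0 < A := by positivity
  by_contra hcon
  push Not at hcon
  have hsub : Icc t s ⊆ Icc t 0 := Icc_subset_Icc_right hs.2
  have hwc : ContinuousOn (fun p : ℝ × (Fin (n + 1) → ℝ) => u p.1 p.2 - Φ p.2 - A * (p.1 - t))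
      (Icc t s ×ˢ K') := by
    refine ((hucont.mono (prod_mono hsub le_rfl)).sub ?_).sub (by fun_prop)
    exact (hΦd.continuousOn.mono hK's).comp continuousOn_snd (fun p hp => hp.2)
  have hxK' : x ∈ K' := interior_subset (hKK' hx)
  obtain ⟨⟨s1, x1⟩, ⟨hs1, hx1⟩, hmax⟩ := (isCompact_Icc.prod hK').exists_isMaxOn
    ⟨(s, x), ⟨hs.1, le_rfl⟩, hxK'⟩ hwc
  have hmax' : ∀ r ∈ Icc t s, ∀ y ∈ K', u r y - Φ y - A * (r - t)
      ≤ u s1 x1 - Φ x1 - A * (s1 - t) := fun r hr y hy => hmax (a := (r, y)) ⟨hr, hy⟩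
  simp only at hs1 hx1
  have hΦx : Φ x = u t x := by simp [hΦ, (hχ1 x).1 hx]
  have hpos : 0 < u s1 x1 - Φ x1 - A * (s1 - t) := by
    have := hmax' s ⟨hs.1, le_rfl⟩ x hxK'
    rw [hΦx] at this
    linarith
  have hu1 := abs_le.1 (hM' s1 (hsub hs1) x1 hx1)
  have hut := abs_le.1 (hM' t ⟨le_rfl, ht⟩ x1 hx1)
  have hts1 : t < s1 := by
    refine lt_of_le_of_ne hs1.1 fun h => ?_
    rw [← h] at hpos
    simp only [hΦ] at hpos
    nlinarith [χ01 x1]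
  have hx1i : x1 ∈ interior K' := by
    by_contra hni
    have : χ x1 = 0 := by
      by_contra h
      exact hni (hχs ▸ (Function.mem_support.2 h))
    simp only [hΦ, this] at hpos
    nlinarith [mul_pos hA0 (sub_pos.2 hts1)]
  have hs10 : s1 ≤ 0 := hs1.2.trans hs.2
  have hmem := (isOpen_strip hΩ).mem_nhds (hK's hx1)
  have hLmax : IsLocalMax (fun y => u s1 y - Φ y) x1 := by
    filter_upwards [isOpen_interior.mem_nhds hx1i] with y hy
    linarith [hmax' s1 hs1 y (interior_subset hy)]
  have hL := Lop_le_of_isLocalMax (b := b) (c := c)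
    (fun i j => (hg.a_reg i j).contDiffAt hmem)
    (fun ξ => le_trans (by positivity) (hg.elliptic x1 (hK's hx1) ξ))
    ((hu.space_reg s1 hs10).contDiffAt hmem) (hΦd.contDiffAt hmem) hLmax
  have hd : HasDerivWithinAt (fun r => u r x1 - A * (r - t)) (Lop a b c (u s1) x1 - A)
      (Iic s1) s1 := by
    have h1 := (hu.pde s1 hs10 x1 (hK's hx1)).mono (Iic_subset_Iic.2 hs10)
    have h2 : HasDerivWithinAt (fun r => A * (r - t)) A (Iic s1) s1 := by
      simpa using (((hasDerivAt_id s1).sub_const t).const_mul A).hasDerivWithinAt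
    exact h1.sub h2
  have hAle := deriv_nonneg_of_left_max hts1 hd (fun r hr => by
    linarith [hmax' r ⟨hr.1, hr.2.trans hs1.2⟩ x1 hx1])
  have hcb : c x1 * (u s1 x1 - Φ x1) ≤ |Mc| * (4 * M + 1) := by
    refine (le_abs_self _).trans ?_
    rw [abs_mul]
    have h0 : 0 ≤ (2 * M + 1) * (1 - χ x1) := mul_nonneg (by linarith) (by linarith [χ01 x1])
    have h1 : (2 * M + 1) * (1 - χ x1) ≤ 2 * M + 1 := by nlinarith [χ01 x1]
    have h2 : |u s1 x1 - Φ x1| ≤ 4 * M + 1 := by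
      rw [abs_le]; constructor <;> simp only [hΦ] <;> linarith
    exact mul_le_mul ((hMc x1 (hK's hx1)).trans (le_abs_self _)) h2 (abs_nonneg _) (abs_nonneg _)
  have := hM1 x1 hx1
  have := le_abs_self M1
  linarith

/-- Rescaling by `k e^{-μ t}` turns `c` into `c - μ`. -/
lemma IsAncientSolution.rescale {n : ℕ} {Ω₀ : Set (Fin n → ℝ)}
    {a : (Fin (n + 1) → ℝ) → Fin (n + 1) → Fin (n + 1) → ℝ}
    {b : (Fin (n + 1) → ℝ) → Fin (n + 1) → ℝ} {c : (Fin (n + 1) → ℝ) → ℝ}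
    {u : ℝ → (Fin (n + 1) → ℝ) → ℝ}
    (hu : IsAncientSolution Ω₀ a b c u) (k μ : ℝ) :
    IsAncientSolution Ω₀ a b (fun x => c x - μ) (fun t x => k * Real.exp (-μ * t) * u t x) where
  cont := by
    refine ContinuousOn.mul (by fun_prop) hu.cont
  space_reg t ht := contDiffOn_const.mul (hu.space_reg t ht)
  pde t ht x hx := by
    have h1 : HasDerivWithinAt (fun s => k * Real.exp (-μ * s)) (k * (Real.exp (-μ * t) * -μ))
        (Iic (0 : ℝ)) t := by
      have : HasDerivAt (fun s : ℝ => -μ * s) (-μ) t := by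
        simpa using (hasDerivAt_id t).const_mul (-μ)
      exact (this.exp.const_mul k).hasDerivWithinAt
    have h2 := h1.mul (hu.pde t ht x hx)
    rw [Lop_const_mul]
    refine h2.congr_deriv ?_
    simp only [Lop]
    ring
  bdry t ht x hx := by simp [hu.bdry t ht x hx]

/-! ### Poincaré inequality in the strip -/

/-- The horizontal embedding `h ↦ (0, h)` of `ℝⁿ` into `ℝ^{n+1}`. -/
def emb {n : ℕ} (h : Fin n → ℝ) : Fin (n + 1) → ℝ := Fin.cons 0 h

lemma emb_zero {n : ℕ} (h : Fin n → ℝ) : emb h 0 = 0 := rfl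

lemma emb_succ {n : ℕ} (h : Fin n → ℝ) (i : Fin n) : emb h i.succ = h i := rfl

lemma continuous_emb {n : ℕ} : Continuous (emb (n := n)) := by
  unfold emb
  exact Continuous.finCons continuous_const continuous_id

lemma sq_intervalIntegral_le {φ : ℝ → ℝ} (hφ : Continuous φ) :
    (∫ s in (0 : ℝ)..1, φ s) ^ 2 ≤ ∫ s in (0 : ℝ)..1, φ s ^ 2 := by
  set m := ∫ s in (0 : ℝ)..1, φ s with hm
  have h0 : 0 ≤ ∫ s in (0 : ℝ)..1, (φ s - m) ^ 2 :=
    intervalIntegral.integral_nonneg zero_le_one fun s _ => sq_nonneg _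
  have e : ∫ s in (0 : ℝ)..1, (φ s - m) ^ 2
      = (∫ s in (0 : ℝ)..1, φ s ^ 2) - (2 * m) * m + m ^ 2 := by
    have : ∀ s, (φ s - m) ^ 2 = (φ s ^ 2 - (2 * m) * φ s) + m ^ 2 := fun s => by ring
    simp only [this]
    rw [intervalIntegral.integral_add, intervalIntegral.integral_sub,
      intervalIntegral.integral_const_mul, ← hm]
    · simp
    all_goals exact Continuous.intervalIntegrable (by fun_prop) _ _
  nlinarith

/-- Increments along a translation by `h` in the cross-section are controlled by the gradient along
the segment (fundamental theorem of calculus and Cauchy–Schwarz). -/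
lemma translate_sq_le {n : ℕ} {W : (Fin (n + 1) → ℝ) → ℝ} (hW : ContDiff ℝ 1 W) {ρ : ℝ}
    {h : Fin n → ℝ} (hh : ∀ i, |h i| ≤ ρ) (x : Fin (n + 1) → ℝ) :
    (W (x + emb h) - W x) ^ 2
      ≤ n * ρ ^ 2 * ∫ s in (0 : ℝ)..1, ∑ i, pd i W (x + s • emb h) ^ 2 := by
  have hpdc : ∀ i, Continuous (pd i W) := fun i =>
    (hW.continuous_fderiv (by norm_num)).clm_apply continuous_const
  have lc : Continuous fun s : ℝ => x + s • emb h := by fun_prop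
  set φ : ℝ → ℝ := fun s => ∑ i, emb h i * pd i W (x + s • emb h) with hφ
  have hφc : Continuous φ :=
    continuous_finsetSum _ fun i _ => continuous_const.mul ((hpdc i).comp lc)
  have hDc : Continuous fun s : ℝ => ∑ i, pd i W (x + s • emb h) ^ 2 :=
    continuous_finsetSum _ fun i _ => ((hpdc i).comp lc).pow 2
  have hd : ∀ s, HasDerivAt (fun s => W (x + s • emb h)) (φ s) s := fun s => by
    have ld : HasDerivAt (fun s : ℝ => x + s • emb h) (emb h) s := by
      simpa using ((hasDerivAt_id s).smul_const (emb h)).const_add x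
    have := ((hW.differentiable (by norm_num)) (x + s • emb h)).hasFDerivAt.comp_hasDerivAt s ld
    rw [fderiv_eq_sum_pd] at this
    exact this
  have hftc := intervalIntegral.integral_eq_sub_of_hasDerivAt (a := 0) (b := 1)
    (fun s _ => hd s) (hφc.intervalIntegrable _ _)
  simp only [one_smul, zero_smul, add_zero] at hftc
  rw [← hftc]
  refine (sq_intervalIntegral_le hφc).trans ?_
  rw [← intervalIntegral.integral_const_mul]
  refine intervalIntegral.integral_mono_on zero_le_one ((hφc.pow 2).intervalIntegrable _ _)
    ((continuous_const.mul hDc).intervalIntegrable _ _) fun s _ => ?_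
  refine (Finset.sum_mul_sq_le_sq_mul_sq _ _ _).trans ?_
  refine mul_le_mul_of_nonneg_right ?_ (Finset.sum_nonneg fun i _ => sq_nonneg _)
  rw [Fin.sum_univ_succ, emb_zero]
  simp only [emb_succ]
  have : ∀ i ∈ Finset.univ, h i ^ 2 ≤ ρ ^ 2 := fun i _ => sq_le_sq' (by linarith [(abs_le.1 (hh i)).1]) (abs_le.1 (hh i)).2
  have := Finset.sum_le_sum this
  simpa using this

/-- Poincaré inequality in the strip with a weight depending only on `x₀`, with a constant
depending only on `n` and the volume of the cross-section. For `h` in a cube `B` of volume `2 V₀`,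
the increment `W(x + h) - W(x)` equals `-W(x)` for `h` in a subset of `B` of measure at least `V₀`;
averaging the translation estimate over `B` gives the inequality. -/
lemma poincare {n : ℕ} {Ω₀ : Set (Fin n → ℝ)} (hΩ : IsOpen Ω₀) {V₀ ρ : ℝ} (hV₀ : 0 < V₀)
    (hρ : 0 ≤ ρ) (hρV : (2 * ρ) ^ n = 2 * V₀) (hvol : volume Ω₀ = ENNReal.ofReal V₀)
    {W : (Fin (n + 1) → ℝ) → ℝ} (hW : ContDiff ℝ 1 W) (hW0 : ∀ x ∉ strip Ω₀, W x = 0)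
    {ζ : ℝ → ℝ} (hζ : Continuous ζ) :
    ∫⁻ x, ENNReal.ofReal (ζ (x 0)) * ENNReal.ofReal (W x ^ 2)
      ≤ ENNReal.ofReal (2 * n * ρ ^ 2)
        * ∫⁻ x, ENNReal.ofReal (ζ (x 0)) * ENNReal.ofReal (∑ i, pd i W x ^ 2) := by
  have hpdc : ∀ i, Continuous (pd i W) := fun i =>
    (hW.continuous_fderiv (by norm_num)).clm_apply continuous_const
  set D : (Fin (n + 1) → ℝ) → ℝ := fun x => ∑ i, pd i W x ^ 2 with hD
  have hDc : Continuous D := continuous_finsetSum _ fun i _ => (hpdc i).pow 2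
  have hD0 : ∀ x, 0 ≤ D x := fun x => Finset.sum_nonneg fun i _ => sq_nonneg _
  set I := ∫⁻ x, ENNReal.ofReal (ζ (x 0)) * ENNReal.ofReal (D x) with hI
  set B : Set (Fin n → ℝ) := Icc (fun _ => -ρ) (fun _ => ρ) with hB
  have hBv : volume B = ENNReal.ofReal (2 * V₀) := by
    rw [hB, Real.volume_Icc_pi]
    simp only [sub_neg_eq_add, Finset.prod_const, Finset.card_univ, Fintype.card_fin]
    rw [← ENNReal.ofReal_pow (by linarith), ← two_mul, hρV]
  have hBm : MeasurableSet B := measurableSet_Icc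
  have hWc := hW.continuous
  have upper : ∀ h ∈ B, ∫⁻ x, ENNReal.ofReal (ζ (x 0)) * ENNReal.ofReal ((W (x + emb h) - W x) ^ 2)
      ≤ ENNReal.ofReal (n * ρ ^ 2) * I := by
    intro h hh
    have hh' : ∀ i, |h i| ≤ ρ := fun i => abs_le.2 ⟨hh.1 i, hh.2 i⟩
    have e1 : ∀ x, ENNReal.ofReal ((W (x + emb h) - W x) ^ 2)
        ≤ ENNReal.ofReal (n * ρ ^ 2)
          * ∫⁻ s in Ioc (0 : ℝ) 1, ENNReal.ofReal (D (x + s • emb h)) := by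
      intro x
      refine (ENNReal.ofReal_le_ofReal (translate_sq_le hW hh' x)).trans ?_
      rw [ENNReal.ofReal_mul (by positivity), intervalIntegral.integral_of_le zero_le_one,
        ofReal_integral_eq_lintegral_ofReal]
      · exact ((hDc.comp (by fun_prop : Continuous fun s : ℝ => x + s • emb h)).integrableOn_Icc).mono_set
          Ioc_subset_Icc_self
      · exact ae_of_all _ fun s => hD0 _
    calc ∫⁻ x, ENNReal.ofReal (ζ (x 0)) * ENNReal.ofReal ((W (x + emb h) - W x) ^ 2)
        ≤ ∫⁻ x, ENNReal.ofReal (n * ρ ^ 2) * ∫⁻ s in Ioc (0 : ℝ) 1,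
            ENNReal.ofReal (ζ (x 0)) * ENNReal.ofReal (D (x + s • emb h)) := by
          refine lintegral_mono fun x => ?_
          refine (mul_le_mul_right (e1 x) _).trans (le_of_eq ?_)
          rw [lintegral_const_mul _ (by fun_prop)]
          ring
      _ = ENNReal.ofReal (n * ρ ^ 2) * ∫⁻ x, ∫⁻ s in Ioc (0 : ℝ) 1,
            ENNReal.ofReal (ζ (x 0)) * ENNReal.ofReal (D (x + s • emb h)) := by
          rw [lintegral_const_mul' _ _ ENNReal.ofReal_ne_top]
      _ = ENNReal.ofReal (n * ρ ^ 2) * ∫⁻ s in Ioc (0 : ℝ) 1, ∫⁻ x,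
            ENNReal.ofReal (ζ (x 0)) * ENNReal.ofReal (D (x + s • emb h)) := by
          rw [lintegral_lintegral_swap]
          have m1 : Continuous fun q : (Fin (n + 1) → ℝ) × ℝ => ζ (q.1 0) := by fun_prop
          have m2 : Continuous fun q : (Fin (n + 1) → ℝ) × ℝ => D (q.1 + q.2 • emb h) := by fun_prop
          exact (m1.measurable.ennreal_ofReal.mul m2.measurable.ennreal_ofReal).aemeasurable
      _ = ENNReal.ofReal (n * ρ ^ 2) * ∫⁻ s in Ioc (0 : ℝ) 1, I := by
          congr 1
          refine lintegral_congr fun s => ?_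
          have := lintegral_add_right_eq_self (μ := volume)
            (fun x => ENNReal.ofReal (ζ (x 0)) * ENNReal.ofReal (D x)) (s • emb h)
          simpa [emb_zero] using this
      _ = ENNReal.ofReal (n * ρ ^ 2) * I := by simp
  have lower : ∀ x, ENNReal.ofReal V₀ * ENNReal.ofReal (W x ^ 2)
      ≤ ∫⁻ h in B, ENNReal.ofReal ((W (x + emb h) - W x) ^ 2) := by
    intro x
    set T : Set (Fin n → ℝ) := (fun h => (fun i : Fin n => x i.succ) + h) ⁻¹' Ω₀ with hT
    have hTv : volume T = ENNReal.ofReal V₀ := by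
      rw [hT, measure_preimage_add, hvol]
    have hTm : MeasurableSet T := (hΩ.preimage (by fun_prop)).measurableSet
    have hBT : ENNReal.ofReal V₀ ≤ volume (B \ T) := by
      have := le_measure_sdiff (μ := volume) (s₁ := B) (s₂ := T)
      rw [hTv, hBv, ← ENNReal.ofReal_sub _ hV₀.le] at this
      convert this using 2; ring
    calc ENNReal.ofReal V₀ * ENNReal.ofReal (W x ^ 2)
        ≤ volume (B \ T) * ENNReal.ofReal (W x ^ 2) := by gcongr
      _ = ∫⁻ h in B \ T, ENNReal.ofReal (W x ^ 2) := by simp [mul_comm]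
      _ = ∫⁻ h in B \ T, ENNReal.ofReal ((W (x + emb h) - W x) ^ 2) := by
          refine setLIntegral_congr_fun (hBm.diff hTm) fun h hh => ?_
          have : W (x + emb h) = 0 := hW0 _ fun hmem => hh.2 hmem
          simp [this]
      _ ≤ _ := lintegral_mono_set sdiff_subset
  have main : ENNReal.ofReal V₀ * ∫⁻ x, ENNReal.ofReal (ζ (x 0)) * ENNReal.ofReal (W x ^ 2)
      ≤ ENNReal.ofReal V₀ * (ENNReal.ofReal (2 * n * ρ ^ 2) * I) := by
    calc ENNReal.ofReal V₀ * ∫⁻ x, ENNReal.ofReal (ζ (x 0)) * ENNReal.ofReal (W x ^ 2)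
        = ∫⁻ x, ENNReal.ofReal (ζ (x 0)) * (ENNReal.ofReal V₀ * ENNReal.ofReal (W x ^ 2)) := by
          rw [← lintegral_const_mul' _ _ ENNReal.ofReal_ne_top]
          exact lintegral_congr fun x => by ring
      _ ≤ ∫⁻ x, ∫⁻ h in B, ENNReal.ofReal (ζ (x 0)) * ENNReal.ofReal ((W (x + emb h) - W x) ^ 2) := by
          refine lintegral_mono fun x => ?_
          rw [lintegral_const_mul' _ _ ENNReal.ofReal_ne_top]
          gcongr
          exact lower x
      _ = ∫⁻ h in B, ∫⁻ x, ENNReal.ofReal (ζ (x 0)) * ENNReal.ofReal ((W (x + emb h) - W x) ^ 2) := by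
          rw [lintegral_lintegral_swap]
          have me := continuous_emb (n := n)
          have m1 : Continuous fun q : (Fin (n + 1) → ℝ) × (Fin n → ℝ) => ζ (q.1 0) := by fun_prop
          have m2 : Continuous fun q : (Fin (n + 1) → ℝ) × (Fin n → ℝ) =>
              (W (q.1 + emb q.2) - W q.1) ^ 2 := by fun_prop
          exact (m1.measurable.ennreal_ofReal.mul m2.measurable.ennreal_ofReal).aemeasurable
      _ ≤ ∫⁻ h in B, ENNReal.ofReal (n * ρ ^ 2) * I := setLIntegral_mono' hBm upper
      _ = ENNReal.ofReal V₀ * (ENNReal.ofReal (2 * n * ρ ^ 2) * I) := by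
          rw [setLIntegral_const, hBv, mul_assoc 2, ENNReal.ofReal_mul zero_le_two,
            ENNReal.ofReal_mul zero_le_two]
          ring
  exact (ENNReal.mul_le_mul_iff_right (by simpa using hV₀) ENNReal.ofReal_ne_top).1 main

/-! ### Truncations and the spatial cutoff -/

/-- If `F` vanishes where `f < σ`, and `f` is continuous up to the boundary of the open set `S` with
zero boundary values, then the extension of `F` by zero vanishes near every point outside `S`. -/
lemma eventually_indicator_eq_zero {n : ℕ} {S : Set (Fin (n + 1) → ℝ)} (hS : IsOpen S)
    {f F : (Fin (n + 1) → ℝ) → ℝ} {σ : ℝ} (hσ : 0 < σ) (hf : ContinuousOn f (closure S))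
    (hf0 : ∀ x ∈ frontier S, f x = 0) (hF0 : ∀ x ∈ S, f x < σ → F x = 0)
    {x : Fin (n + 1) → ℝ} (hx : x ∉ S) : ∀ᶠ y in nhds x, S.indicator F y = 0 := by
  by_cases hc : x ∈ closure S
  · have hfr : x ∈ frontier S := by
      rw [frontier, hS.interior_eq]; exact ⟨hc, hx⟩
    have h1 : ∀ᶠ y in nhdsWithin x (closure S), f y < σ := by
      refine (hf x hc).eventually_lt continuousWithinAt_const ?_
      rw [hf0 x hfr]; exact hσ
    filter_upwards [eventually_nhdsWithin_iff.1 h1] with y hy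
    by_cases hyS : y ∈ S
    · rw [indicator_of_mem hyS]; exact hF0 y hyS (hy (subset_closure hyS))
    · exact indicator_of_notMem hyS _
  · filter_upwards [isClosed_closure.isOpen_compl.mem_nhds hc] with y hy
    exact indicator_of_notMem (fun h => hy (subset_closure h)) _

lemma contDiff_indicator_of_vanish {n : ℕ} {S : Set (Fin (n + 1) → ℝ)} (hS : IsOpen S)
    {f F : (Fin (n + 1) → ℝ) → ℝ} {σ : ℝ} (hσ : 0 < σ) (hf : ContinuousOn f (closure S))
    (hf0 : ∀ x ∈ frontier S, f x = 0) {k : ℕ∞} (hF : ContDiffOn ℝ k F S)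
    (hF0 : ∀ x ∈ S, f x < σ → F x = 0) : ContDiff ℝ k (S.indicator F) := by
  rw [contDiff_iff_contDiffAt]
  intro x
  by_cases hx : x ∈ S
  · refine (hF.contDiffAt (hS.mem_nhds hx)).congr_of_eventuallyEq ?_
    filter_upwards [hS.mem_nhds hx] with y hy
    simp [hy]
  · exact (contDiffAt_const (c := (0 : ℝ))).congr_of_eventuallyEq
      (eventually_indicator_eq_zero hS hσ hf hf0 hF0 hx)

/-- A smoothed version `ψ` of `s ↦ (s - σ)₊`, with derivative `p`: convex, vanishing for `s ≤ σ`,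
with slope at most one. -/
structure TruncFn (σ : ℝ) (ψ p : ℝ → ℝ) : Prop where
  hasDeriv : ∀ s, HasDerivAt ψ (p s) s
  p_smooth : ContDiff ℝ 1 p
  p_deriv_nonneg : ∀ s, 0 ≤ deriv p s
  p_nonneg : ∀ s, 0 ≤ p s
  p_le_one : ∀ s, p s ≤ 1
  psi_zero : ∀ s ≤ σ, ψ s = 0
  p_zero : ∀ s ≤ σ, p s = 0
  psi_pos : ∀ s, σ < s → 0 < ψ s

lemma exists_trunc (σ : ℝ) : ∃ ψ p, TruncFn σ ψ p := by
  set p : ℝ → ℝ := fun s => Real.smoothTransition (s - σ) with hp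
  have hpc : ContDiff ℝ 1 p := Real.smoothTransition.contDiff.comp (by fun_prop)
  have hpcont : Continuous p := hpc.continuous
  have hd : ∀ s, HasDerivAt (fun s => ∫ r in σ..s, p r) (p s) s := fun s =>
    intervalIntegral.integral_hasDerivAt_right (hpcont.intervalIntegrable _ _)
      (hpcont.stronglyMeasurableAtFilter _ _) hpcont.continuousAt
  have hp0 : ∀ s ≤ σ, p s = 0 := fun s hs =>
    Real.smoothTransition.zero_of_nonpos (by linarith)
  refine ⟨fun s => ∫ r in σ..s, p r, p, hd, hpc, fun s => ?_, fun s => ?_, fun s => ?_, ?_,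
    hp0, ?_⟩
  · have hmono : Monotone p := fun x y h => Real.smoothTransition.monotone (by linarith)
    exact hmono.deriv_nonneg
  · exact Real.smoothTransition.nonneg _
  · exact Real.smoothTransition.le_one _
  · intro s hs
    rw [intervalIntegral.integral_congr (g := fun _ => (0 : ℝ)), intervalIntegral.integral_zero]
    intro r hr
    rw [uIcc_of_ge hs] at hr
    exact hp0 r hr.2
  · intro s hs
    refine intervalIntegral.intervalIntegral_pos_of_pos_on (hpcont.intervalIntegrable _ _) ?_ hs
    intro r hr
    exact Real.smoothTransition.pos_of_pos (by linarith [hr.1])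

namespace TruncFn
variable {σ : ℝ} {ψ p : ℝ → ℝ}

lemma psi_nonneg (h : TruncFn σ ψ p) (s : ℝ) : 0 ≤ ψ s := by
  rcases le_or_gt s σ with hs | hs
  · exact (h.psi_zero s hs).ge
  · exact (h.psi_pos s hs).le

lemma contDiff (h : TruncFn σ ψ p) : ContDiff ℝ 2 ψ := by
  have e : deriv ψ = p := funext fun s => (h.hasDeriv s).deriv
  have : ContDiff ℝ (1 + 1) ψ := by
    rw [contDiff_succ_iff_deriv]
    exact ⟨fun s => (h.hasDeriv s).differentiableAt, by simp, e ▸ h.p_smooth⟩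
  simpa [one_add_one_eq_two] using this

lemma lipschitz (h : TruncFn σ ψ p) (r s : ℝ) : |ψ r - ψ s| ≤ |r - s| := by
  have := Convex.norm_image_sub_le_of_norm_deriv_le (f := ψ) (C := 1) (s := univ) (x := s) (y := r)
    (fun x _ => (h.hasDeriv x).differentiableAt)
    (fun x _ => by
      rw [(h.hasDeriv x).deriv, Real.norm_eq_abs, abs_of_nonneg (h.p_nonneg x)]
      exact h.p_le_one x) convex_univ (mem_univ _) (mem_univ _)
  simpa using this

lemma abs_le (h : TruncFn σ ψ p) (hσ : 0 < σ) (s : ℝ) : ψ s ≤ |s| := by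
  have := h.lipschitz s 0
  rw [h.psi_zero 0 hσ.le, sub_zero, sub_zero, abs_of_nonneg (h.psi_nonneg s)] at this
  exact this

lemma sq_le (h : TruncFn σ ψ p) (hσ : 0 < σ) (s : ℝ) : ψ s ^ 2 ≤ s ^ 2 := by
  rw [← sq_abs s]
  exact pow_le_pow_left₀ (h.psi_nonneg s) (h.abs_le hσ s) 2

end TruncFn

/-- The spatial cutoff `(1 / cosh (δ y) - 1 / cosh (δ R))₊`. -/
def eta (δ R y : ℝ) : ℝ := max ((Real.cosh (δ * y))⁻¹ - (Real.cosh (δ * R))⁻¹) 0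

lemma hasDerivAt_max_sq (y : ℝ) : HasDerivAt (fun y : ℝ => (max y 0) ^ 2) (2 * max y 0) y := by
  rcases lt_trichotomy y 0 with h | h | h
  · rw [max_eq_right h.le, mul_zero]
    refine (hasDerivAt_const y (0 : ℝ)).congr_of_eventuallyEq ?_
    filter_upwards [Iio_mem_nhds h] with z hz
    simp [max_eq_right (mem_Iio.1 hz).le]
  · subst h
    rw [hasDerivAt_iff_isLittleO_nhds_zero]
    simp only [zero_add, max_self, mul_zero, smul_eq_mul, sub_zero, ne_eq, OfNat.ofNat_ne_zero,
      not_false_eq_true, zero_pow]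
    refine Asymptotics.IsBigO.trans_isLittleO (g := fun y : ℝ => y ^ 2) ?_ ?_
    · refine Asymptotics.IsBigO.of_bound 1 (Eventually.of_forall fun z => ?_)
      rw [one_mul, Real.norm_eq_abs, Real.norm_eq_abs, abs_pow, abs_pow]
      have : |max z 0| ≤ |z| := by rcases le_total z 0 with h | h <;> simp [h]
      exact pow_le_pow_left₀ (abs_nonneg _) this 2
    · simpa using Asymptotics.isLittleO_pow_pow (𝕜 := ℝ) (m := 1) (n := 2) (by norm_num)
  · rw [max_eq_left h.le]
    have : HasDerivAt (fun y : ℝ => y ^ 2) (2 * y) y := by simpa using hasDerivAt_pow 2 y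
    refine this.congr_of_eventuallyEq ?_
    filter_upwards [Ioi_mem_nhds h] with z hz
    simp [max_eq_left (mem_Ioi.1 hz).le]

lemma hasDerivAt_eta_sq (δ R y : ℝ) : HasDerivAt (fun y => eta δ R y ^ 2)
    (2 * eta δ R y * (-(Real.sinh (δ * y) * δ) / Real.cosh (δ * y) ^ 2)) y := by
  have h1 : HasDerivAt (fun y : ℝ => δ * y) δ y := by simpa using (hasDerivAt_id y).const_mul δ
  have h2 := (h1.cosh.inv (Real.cosh_pos _).ne').sub_const ((Real.cosh (δ * R))⁻¹)
  exact (hasDerivAt_max_sq _).comp y h2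

lemma continuous_eta (δ R : ℝ) : Continuous (eta δ R) := by
  unfold eta
  have : Continuous fun y : ℝ => (Real.cosh (δ * y))⁻¹ :=
    Continuous.inv₀ (by fun_prop) fun y => (Real.cosh_pos _).ne'
  fun_prop

lemma contDiff_eta_sq (δ R : ℝ) : ContDiff ℝ 1 (fun y => eta δ R y ^ 2) := by
  rw [contDiff_one_iff_deriv]
  refine ⟨fun y => (hasDerivAt_eta_sq δ R y).differentiableAt, ?_⟩
  rw [funext fun y => (hasDerivAt_eta_sq δ R y).deriv]
  have := continuous_eta δ R
  refine (continuous_const.mul this).mul (Continuous.div (by fun_prop) (by fun_prop) ?_)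
  intro y
  exact (pow_pos (Real.cosh_pos _) 2).ne'

lemma eta_nonneg (δ R y : ℝ) : 0 ≤ eta δ R y := le_max_right _ _

lemma eta_le_one (δ R y : ℝ) : eta δ R y ≤ 1 := by
  refine max_le ?_ zero_le_one
  have h1 := inv_le_one_of_one_le₀ (Real.one_le_cosh (δ * y))
  have h2 := inv_pos.2 (Real.cosh_pos (δ * R))
  linarith

lemma eta_eq_zero {δ R y : ℝ} (hδ : 0 < δ) (hR : 0 < R) (hy : R ≤ |y|) : eta δ R y = 0 := by
  refine max_eq_right (sub_nonpos.2 ?_)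
  refine inv_anti₀ (Real.cosh_pos _) ?_
  rw [Real.cosh_le_cosh, abs_mul, abs_mul, abs_of_pos hR]
  gcongr

lemma eta_pos {δ R y : ℝ} (hδ : 0 < δ) (hy : |y| < R) : 0 < eta δ R y := by
  refine lt_max_of_lt_left (sub_pos.2 ?_)
  refine inv_strictAnti₀ (Real.cosh_pos _) ?_
  rw [Real.cosh_lt_cosh, abs_mul, abs_mul, abs_of_pos hδ]
  have := le_abs_self R
  gcongr
  linarith

lemma eta_mono {δ R R' : ℝ} (hR : 0 ≤ R) (h : R ≤ R') (hδ : 0 < δ) (y : ℝ) :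
    eta δ R y ≤ eta δ R' y := by
  refine max_le_max ?_ le_rfl
  refine sub_le_sub_left ?_ _
  refine inv_anti₀ (Real.cosh_pos _) ?_
  rw [Real.cosh_le_cosh, abs_mul, abs_mul]
  gcongr

/-- The reason for the `cosh` profile: `|η'| ≤ δ (η + 1 / cosh (δ R))`, so the cutoff error is
absorbed by `η²` up to a term of size `e^{-2δR}`. It is stated for `η²`, which is `C¹`. -/
lemma abs_deriv_eta_sq_le {δ R : ℝ} (hδ : 0 < δ) (y : ℝ) :
    |deriv (fun y => eta δ R y ^ 2) y|
      ≤ 2 * δ * eta δ R y * (eta δ R y + (Real.cosh (δ * R))⁻¹) := by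
  rw [(hasDerivAt_eta_sq δ R y).deriv, abs_mul, abs_mul, abs_of_nonneg (eta_nonneg δ R y),
    abs_two, abs_div, abs_neg, abs_mul, abs_of_pos hδ, abs_of_pos (pow_pos (Real.cosh_pos _) 2)]
  have h1 : |Real.sinh (δ * y)| ≤ Real.cosh (δ * y) := by
    rw [abs_le]
    constructor
    · have := Real.exp_pos (δ * y); rw [← Real.cosh_add_sinh] at this; linarith
    · exact (Real.sinh_lt_cosh _).le
  have h2 : (Real.cosh (δ * y))⁻¹ ≤ eta δ R y + (Real.cosh (δ * R))⁻¹ := by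
    have := le_max_left ((Real.cosh (δ * y))⁻¹ - (Real.cosh (δ * R))⁻¹) 0
    unfold eta; linarith
  have h3 : |Real.sinh (δ * y)| * δ / Real.cosh (δ * y) ^ 2 ≤ δ * (Real.cosh (δ * y))⁻¹ := by
    have hc := Real.cosh_pos (δ * y)
    rw [div_le_iff₀ (by positivity)]
    have : δ * (Real.cosh (δ * y))⁻¹ * Real.cosh (δ * y) ^ 2 = Real.cosh (δ * y) * δ := by
      field_simp
    rw [this]
    gcongr
  have h0 := eta_nonneg δ R y
  calc _ ≤ 2 * eta δ R y * (δ * (eta δ R y + (Real.cosh (δ * R))⁻¹)) := by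
        gcongr; exact h3.trans (by gcongr)
    _ = _ := by ring

lemma inv_cosh_le (δ R : ℝ) : (Real.cosh (δ * R))⁻¹ ≤ 2 * Real.exp (-(δ * R)) := by
  rw [Real.exp_neg, ← div_eq_mul_inv, inv_le_comm₀ (Real.cosh_pos _) (by positivity), inv_div,
    Real.cosh_eq]
  have := Real.exp_pos (-(δ * R))
  linarith

/-! ### Pointwise energy inequality and integration by parts -/

lemma young {k : ℝ} (hk : 0 < k) (x y : ℝ) : 2 * (x * y) ≤ k * x ^ 2 + k⁻¹ * y ^ 2 := by
  have h : k * x ^ 2 + k⁻¹ * y ^ 2 - 2 * (x * y) = k⁻¹ * (k * x - y) ^ 2 := by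
    field_simp; ring
  have : 0 ≤ k⁻¹ * (k * x - y) ^ 2 := by positivity
  linarith

/-- The pointwise energy inequality as a statement about real numbers: `ξ` stands for `∇f`,
`A`, `β`, `c` for the coefficients, `Dv` for `div (a ∇f)`, `q` for the derivative of `p` and
`z` for the derivative of the squared cutoff. -/
lemma energy_algebra {m : ℕ} (hm : 0 < m) {A : Fin m → Fin m → ℝ} {β ξ : Fin m → ℝ}
    {lam Lam e η ε δ ψ p q z c f Dv : ℝ} (i₀ : Fin m) (hlam : 0 < lam) (hLam : 0 ≤ Lam)
    (hell : lam * ∑ i, ξ i ^ 2 ≤ ∑ i, ∑ j, A i j * ξ i * ξ j) (hA : ∀ i j, |A i j| ≤ Lam)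
    (he : 0 ≤ e) (hβ : ∀ i, |β i| ≤ √e) (hη : 0 ≤ η) (hε : 0 ≤ ε) (hδ : 0 ≤ δ) (hψ : 0 ≤ ψ)
    (hp : 0 ≤ p) (hq : 0 ≤ q) (hz : |z| ≤ 2 * δ * η * (η + ε)) (hc : c ≤ 0) (hf : 0 ≤ ψ * p * f) :
    η ^ 2 * (2 * ψ * p * (Dv + (∑ i, β i * ξ i) + c * f))
      ≤ (η ^ 2 * (2 * ψ * p) * Dv
          + η ^ 2 * ((2 * p ^ 2 + 2 * ψ * q) * ∑ i, ∑ j, A i j * ξ i * ξ j)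
          + z * (2 * ψ * p * ∑ j, A i₀ j * ξ j))
        - lam * (η ^ 2 * ∑ i, (p * ξ i) ^ 2)
        + 2 * m * e / lam * (η ^ 2 * ψ ^ 2)
        + 16 * m * Lam ^ 2 * δ ^ 2 / lam * ((η ^ 2 + ε ^ 2) * ψ ^ 2) := by
  have hm' : (0 : ℝ) < m := by exact_mod_cast hm
  set S := ∑ i, |ξ i| with hS
  set X := ∑ i, ξ i ^ 2 with hX
  set Q := ∑ i, ∑ j, A i j * ξ i * ξ j with hQ
  have hS0 : 0 ≤ S := Finset.sum_nonneg fun i _ => abs_nonneg _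
  have hX0 : 0 ≤ X := Finset.sum_nonneg fun i _ => sq_nonneg _
  have hSX : S ^ 2 ≤ m * X := by
    have := sq_sum_le_card_mul_sum_sq (s := Finset.univ) (f := fun i => |ξ i|)
    simpa [sq_abs] using this
  have hb : ∑ i, β i * ξ i ≤ √e * S := by
    rw [hS, Finset.mul_sum]
    refine Finset.sum_le_sum fun i _ => (le_abs_self _).trans ?_
    rw [abs_mul]; exact mul_le_mul_of_nonneg_right (hβ i) (abs_nonneg _)
  have ha : |∑ j, A i₀ j * ξ j| ≤ Lam * S := by
    rw [hS, Finset.mul_sum]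
    refine (Finset.abs_sum_le_sum_abs _ _).trans (Finset.sum_le_sum fun i _ => ?_)
    rw [abs_mul]; exact mul_le_mul_of_nonneg_right (hA _ _) (abs_nonneg _)
  have hpX : ∑ i, (p * ξ i) ^ 2 = p ^ 2 * X := by
    rw [hX, Finset.mul_sum]; exact Finset.sum_congr rfl fun i _ => by ring
  rw [hpX]
  set k := lam / (2 * m) with hk
  have hk0 : 0 < k := by positivity
  have kinv : k⁻¹ = 2 * m / lam := by rw [hk, inv_div]
  -- Each of the two error terms below may consume half of the spare `lam η² |p ξ|²`.
  have t1 : η ^ 2 * (2 * ψ * p * ∑ i, β i * ξ i)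
      ≤ k * (η * p * S) ^ 2 + 2 * m * e / lam * (η ^ 2 * ψ ^ 2) := by
    have h1 := young hk0 (η * p * S) (η * ψ * √e)
    have h2 : k⁻¹ * (η * ψ * √e) ^ 2 = 2 * m * e / lam * (η ^ 2 * ψ ^ 2) := by
      rw [kinv, mul_pow, Real.sq_sqrt he]; ring
    have h3 : η ^ 2 * (2 * ψ * p * ∑ i, β i * ξ i) ≤ η ^ 2 * (2 * ψ * p * (√e * S)) := by gcongr
    rw [h2] at h1
    refine h3.trans (le_trans (le_of_eq ?_) h1)
    ring
  have t2 : -(z * (2 * ψ * p * ∑ j, A i₀ j * ξ j))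
      ≤ k * (η * p * S) ^ 2 + 16 * m * Lam ^ 2 * δ ^ 2 / lam * ((η ^ 2 + ε ^ 2) * ψ ^ 2) := by
    have h1 := young hk0 (η * p * S) (2 * δ * Lam * (η + ε) * ψ)
    have h2 : k⁻¹ * (2 * δ * Lam * (η + ε) * ψ) ^ 2
        ≤ 16 * m * Lam ^ 2 * δ ^ 2 / lam * ((η ^ 2 + ε ^ 2) * ψ ^ 2) := by
      have : k⁻¹ * (2 * δ * Lam * (η + ε) * ψ) ^ 2
          = 8 * m * Lam ^ 2 * δ ^ 2 / lam * ((η + ε) ^ 2 * ψ ^ 2) := by rw [kinv]; ring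
      rw [this]
      have h4 : (η + ε) ^ 2 ≤ 2 * (η ^ 2 + ε ^ 2) := by nlinarith [sq_nonneg (η - ε)]
      calc _ ≤ 8 * m * Lam ^ 2 * δ ^ 2 / lam * ((2 * (η ^ 2 + ε ^ 2)) * ψ ^ 2) := by gcongr
        _ = _ := by ring
    have h3 : -(z * (2 * ψ * p * ∑ j, A i₀ j * ξ j))
        ≤ (2 * δ * η * (η + ε)) * (2 * ψ * p * (Lam * S)) := by
      refine (neg_le_abs _).trans ?_
      rw [abs_mul, abs_mul, abs_of_nonneg (by positivity : 0 ≤ 2 * ψ * p)]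
      gcongr
    refine h3.trans (le_trans (le_of_eq ?_) (h1.trans (by gcongr)))
    ring
  have t3 : 2 * (k * (η * p * S) ^ 2) ≤ lam * (η ^ 2 * (p ^ 2 * X)) := by
    have : lam * (η ^ 2 * (p ^ 2 * X)) = 2 * (k * (η ^ 2 * p ^ 2 * (m * X))) := by
      rw [hk]; field_simp
    rw [this, mul_pow, mul_pow]
    gcongr
  have t4 : η ^ 2 * (2 * ψ * p * (c * f)) ≤ 0 := by
    have : η ^ 2 * (2 * ψ * p * (c * f)) = c * (2 * η ^ 2 * (ψ * p * f)) := by ring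
    rw [this]; exact mul_nonpos_of_nonpos_of_nonneg hc (by positivity)
  have t5 : η ^ 2 * (2 * p ^ 2 * (lam * X)) ≤ η ^ 2 * ((2 * p ^ 2 + 2 * ψ * q) * Q) := by
    have hQ0 : 0 ≤ Q := le_trans (by positivity) hell
    have : 2 * p ^ 2 * (lam * X) ≤ 2 * p ^ 2 * Q := by gcongr
    have h2 : 0 ≤ 2 * ψ * q * Q := by positivity
    have : 2 * p ^ 2 * (lam * X) ≤ (2 * p ^ 2 + 2 * ψ * q) * Q := by linarith
    gcongr
  have e1 : η ^ 2 * (2 * ψ * p * (Dv + (∑ i, β i * ξ i) + c * f))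
      = η ^ 2 * (2 * ψ * p) * Dv + η ^ 2 * (2 * ψ * p * ∑ i, β i * ξ i)
        + η ^ 2 * (2 * ψ * p * (c * f)) := by ring
  have e2 : η ^ 2 * (2 * p ^ 2 * (lam * X)) = 2 * (lam * (η ^ 2 * (p ^ 2 * X))) := by ring
  rw [e1]
  linarith

lemma pd_comp_coord {n : ℕ} {i : Fin (n + 1)} {ζ : ℝ → ℝ} {z : ℝ} {x : Fin (n + 1) → ℝ}
    (h : HasDerivAt ζ z (x 0)) :
    pd i (fun y => ζ (y 0)) x = if i = 0 then z else 0 := by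
  have h1 : HasFDerivAt (fun y : Fin (n + 1) → ℝ => y 0)
      (ContinuousLinearMap.proj (R := ℝ) (φ := fun _ => ℝ) (0 : Fin (n + 1))) x := hasFDerivAt_apply 0 x
  have := h.comp_hasFDerivAt x h1
  have h2 := this.fderiv
  simp only [Function.comp_def] at h2
  rw [pd, h2]
  simp [Pi.single_apply, eq_comm]

lemma pd_comp {n : ℕ} {i : Fin (n + 1)} {g : ℝ → ℝ} {g' : ℝ} {f : (Fin (n + 1) → ℝ) → ℝ}
    {x : Fin (n + 1) → ℝ} (h : HasDerivAt g g' (f x)) (hf : DifferentiableAt ℝ f x) :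
    pd i (fun y => g (f y)) x = g' * pd i f x := by
  have h2 := (h.comp_hasFDerivAt x hf.hasFDerivAt).fderiv
  simp only [Function.comp_def] at h2
  rw [pd, h2]
  simp [pd]

/-- The divergence of a compactly supported `C¹` field integrates to zero. -/
lemma integral_pd_eq_zero {n : ℕ} {i : Fin (n + 1)} {f : (Fin (n + 1) → ℝ) → ℝ}
    (hf : ContDiff ℝ 1 f) (hc : HasCompactSupport f) : ∫ x, pd i f x = 0 := by
  have hpc : Continuous (fun x => pd i f x) :=
    (hf.continuous_fderiv (by norm_num)).clm_apply continuous_const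
  have hps : HasCompactSupport (fun x => pd i f x) := by
    have := hc.fderiv_apply (𝕜 := ℝ) (Pi.single i 1)
    exact this
  have := integral_mul_fderiv_eq_neg_fderiv_mul_of_integrable (μ := volume)
    (f := fun _ : Fin (n + 1) → ℝ => (1 : ℝ)) (g := f) (v := Pi.single i 1)
    (by simp) (by simpa [pd] using hpc.integrable_of_hasCompactSupport hps)
    (by simpa using hf.continuous.integrable_of_hasCompactSupport hc)
    (by fun_prop) (fun x _ => hf.differentiable (by norm_num) x)
  simpa [pd] using this

lemma isCompact_slab {n : ℕ} {Ω₀ : Set (Fin n → ℝ)} (hb : Bornology.IsBounded Ω₀) (R : ℝ) :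
    IsCompact ({x : Fin (n + 1) → ℝ | |x 0| ≤ R} ∩ closure (strip Ω₀)) := by
  obtain ⟨M, hM⟩ := hb.exists_norm_le
  have hcl : IsClosed {x : Fin (n + 1) → ℝ | ∀ i : Fin n, |x i.succ| ≤ M} := by
    simp only [ofPred_forall]
    exact isClosed_iInter fun i => isClosed_le (by fun_prop) continuous_const
  have hsub : closure (strip Ω₀) ⊆ {x : Fin (n + 1) → ℝ | ∀ i : Fin n, |x i.succ| ≤ M} :=
    closure_minimal (fun x hx i => (norm_le_pi_norm (fun i : Fin n => x i.succ) i).trans (hM _ hx)) hcl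
  have hI : IsCompact (Icc (Fin.cons (-R) fun _ => -M : Fin (n + 1) → ℝ)
    (Fin.cons R fun _ => M : Fin (n + 1) → ℝ)) := isCompact_Icc
  refine hI.of_isClosed_subset
    ((isClosed_le (by fun_prop) continuous_const).inter isClosed_closure) ?_
  rintro x ⟨h1, h2⟩
  constructor <;> intro i <;> refine Fin.cases ?_ (fun j => ?_) i
  · exact (abs_le.1 h1).1
  · exact (abs_le.1 (hsub h2 j)).1
  · exact (abs_le.1 h1).2
  · exact (abs_le.1 (hsub h2 j)).2

lemma hasCompactSupport_eta_mul {n : ℕ} {Ω₀ : Set (Fin n → ℝ)} (hb : Bornology.IsBounded Ω₀)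
    {δ R : ℝ} (hδ : 0 < δ) (hR : 0 < R) {h : (Fin (n + 1) → ℝ) → ℝ}
    (h0 : ∀ x ∉ closure (strip Ω₀), h x = 0) :
    HasCompactSupport fun x : Fin (n + 1) → ℝ => eta δ R (x 0) ^ 2 * h x := by
  refine HasCompactSupport.intro (isCompact_slab hb R) fun x hx => ?_
  by_cases h1 : x ∈ closure (strip Ω₀)
  · have h2 : R ≤ |x 0| := le_of_not_ge fun h => hx ⟨h, h1⟩
    simp [eta_eq_zero hδ hR h2]
  · simp [h0 x h1]

/-! ### The truncated solution and its flux -/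

section
variable {n : ℕ} {Ω₀ : Set (Fin n → ℝ)} {f : (Fin (n + 1) → ℝ) → ℝ} {σ : ℝ} {ψ p : ℝ → ℝ}

/-- The truncated function `ψ ∘ f`, extended by zero outside the strip. -/
def truncExt (Ω₀ : Set (Fin n → ℝ)) (ψ : ℝ → ℝ) (f : (Fin (n + 1) → ℝ) → ℝ) :
    (Fin (n + 1) → ℝ) → ℝ := (strip Ω₀).indicator fun x => ψ (f x)

lemma truncExt_of_notMem {x : Fin (n + 1) → ℝ} (hx : x ∉ strip Ω₀) : truncExt Ω₀ ψ f x = 0 :=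
  indicator_of_notMem hx _

lemma truncExt_of_mem {x : Fin (n + 1) → ℝ} (hx : x ∈ strip Ω₀) : truncExt Ω₀ ψ f x = ψ (f x) :=
  indicator_of_mem hx _

lemma contDiff_truncExt (hΩ : IsOpen Ω₀) (hσ : 0 < σ) (hψ : TruncFn σ ψ p)
    (hf2 : ContDiffOn ℝ 2 f (strip Ω₀)) (hfc : ContinuousOn f (closure (strip Ω₀)))
    (hf0 : ∀ x ∈ frontier (strip Ω₀), f x = 0) : ContDiff ℝ 1 (truncExt Ω₀ ψ f) :=
  contDiff_indicator_of_vanish (k := 1) (isOpen_strip hΩ) hσ hfc hf0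
    ((hψ.contDiff.of_le (by norm_num)).comp_contDiffOn (hf2.of_le (by norm_num)))
    fun _ _ h => hψ.psi_zero _ h.le

lemma pd_truncExt (hΩ : IsOpen Ω₀) (hψ : TruncFn σ ψ p)
    (hf2 : ContDiffOn ℝ 2 f (strip Ω₀)) {x : Fin (n + 1) → ℝ} (hx : x ∈ strip Ω₀)
    (i : Fin (n + 1)) : pd i (truncExt Ω₀ ψ f) x = p (f x) * pd i f x := by
  rw [pd_congr (g := fun y => ψ (f y))]
  · exact pd_comp (hψ.hasDeriv _)
      ((hf2.contDiffAt ((isOpen_strip hΩ).mem_nhds hx)).differentiableAt (by norm_num))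
  · filter_upwards [(isOpen_strip hΩ).mem_nhds hx] with y hy
    exact truncExt_of_mem hy

/-- The field `2 ψ(f) p(f) (a ∇f)ᵢ`, extended by zero outside the strip. -/
def flux (Ω₀ : Set (Fin n → ℝ)) (ψ p : ℝ → ℝ)
    (a : (Fin (n + 1) → ℝ) → Fin (n + 1) → Fin (n + 1) → ℝ) (f : (Fin (n + 1) → ℝ) → ℝ)
    (i : Fin (n + 1)) : (Fin (n + 1) → ℝ) → ℝ :=
  (strip Ω₀).indicator fun x => 2 * ψ (f x) * p (f x) * ∑ j, a x i j * pd j f x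

lemma contDiff_flux (hΩ : IsOpen Ω₀) (hσ : 0 < σ) (hψ : TruncFn σ ψ p)
    {a : (Fin (n + 1) → ℝ) → Fin (n + 1) → Fin (n + 1) → ℝ}
    (ha : ∀ i j, ContDiffOn ℝ 1 (fun x => a x i j) (strip Ω₀))
    (hf2 : ContDiffOn ℝ 2 f (strip Ω₀)) (hfc : ContinuousOn f (closure (strip Ω₀)))
    (hf0 : ∀ x ∈ frontier (strip Ω₀), f x = 0) (i : Fin (n + 1)) :
    ContDiff ℝ 1 (flux Ω₀ ψ p a f i) := by
  refine contDiff_indicator_of_vanish (k := 1) (isOpen_strip hΩ) hσ hfc hf0 ?_ ?_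
  · have hf1 : ContDiffOn ℝ 1 f (strip Ω₀) := hf2.of_le (by norm_num)
    have hpd : ∀ j, ContDiffOn ℝ 1 (pd j f) (strip Ω₀) := fun j x hx =>
      (contDiffAt_pd (m := 2) (k := 1) (hf2.contDiffAt ((isOpen_strip hΩ).mem_nhds hx))
        (by norm_num)).contDiffWithinAt
    have h1 : ContDiffOn ℝ 1 (fun x => ψ (f x)) (strip Ω₀) :=
      (hψ.contDiff.of_le (by norm_num)).comp_contDiffOn hf1
    have h2 : ContDiffOn ℝ 1 (fun x => p (f x)) (strip Ω₀) := hψ.p_smooth.comp_contDiffOn hf1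
    exact ((contDiffOn_const.mul h1).mul h2).mul
      (ContDiffOn.sum fun j _ => (ha i j).mul (hpd j))
  · intro x _ h
    simp [hψ.psi_zero _ h.le]

/-- Pointwise divergence of the cut-off flux. -/
lemma div_flux (hΩ : IsOpen Ω₀) (hψ : TruncFn σ ψ p)
    {a : (Fin (n + 1) → ℝ) → Fin (n + 1) → Fin (n + 1) → ℝ}
    (ha : ∀ i j, ContDiffOn ℝ 1 (fun x => a x i j) (strip Ω₀))
    (hf2 : ContDiffOn ℝ 2 f (strip Ω₀)) {ζ : ℝ → ℝ} {z : ℝ} {x : Fin (n + 1) → ℝ}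
    (hζ : HasDerivAt ζ z (x 0)) (hx : x ∈ strip Ω₀) :
    ∑ i, pd i (fun y => ζ (y 0) * flux Ω₀ ψ p a f i y) x
      = ζ (x 0) * (2 * ψ (f x) * p (f x)) * (∑ i, pd i (fun y => ∑ j, a y i j * pd j f y) x)
        + ζ (x 0) * ((2 * p (f x) ^ 2 + 2 * ψ (f x) * deriv p (f x))
            * ∑ i, ∑ j, a x i j * pd i f x * pd j f x)
        + z * (2 * ψ (f x) * p (f x) * ∑ j, a x 0 j * pd j f x) := by
  have hfa := hf2.contDiffAt ((isOpen_strip hΩ).mem_nhds hx)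
  have hfd : DifferentiableAt ℝ f x := hfa.differentiableAt (by norm_num)
  have hg : HasDerivAt (fun s => 2 * ψ s * p s)
      (2 * p (f x) ^ 2 + 2 * ψ (f x) * deriv p (f x)) (f x) := by
    have := ((hψ.hasDeriv (f x)).const_mul 2).fun_mul
      ((hψ.p_smooth.differentiable (by norm_num)) (f x)).hasDerivAt
    exact this.congr_deriv (by ring)
  have hgd : DifferentiableAt ℝ (fun y => 2 * ψ (f y) * p (f y)) x :=
    (hg.differentiableAt).comp x hfd
  have hF : ∀ i, DifferentiableAt ℝ (fun y => ∑ j, a y i j * pd j f y) x := fun i =>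
    DifferentiableAt.fun_sum fun j _ =>
      (((ha i j).contDiffAt ((isOpen_strip hΩ).mem_nhds hx)).differentiableAt (by norm_num)).mul
        ((contDiffAt_pd (m := 2) (k := 1) hfa (by norm_num)).differentiableAt (by norm_num))
  have hζd : DifferentiableAt ℝ (fun y : Fin (n + 1) → ℝ => ζ (y 0)) x :=
    DifferentiableAt.comp x (g := ζ) hζ.differentiableAt (by fun_prop)
  have key : ∀ i, pd i (fun y => ζ (y 0) * flux Ω₀ ψ p a f i y) x
      = ζ (x 0) * (2 * ψ (f x) * p (f x)) * pd i (fun y => ∑ j, a y i j * pd j f y) x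
        + ζ (x 0) * ((2 * p (f x) ^ 2 + 2 * ψ (f x) * deriv p (f x))
            * ∑ j, a x i j * pd i f x * pd j f x)
        + (if i = 0 then z else 0) * (2 * ψ (f x) * p (f x) * ∑ j, a x i j * pd j f x) := by
    intro i
    rw [pd_congr (g := fun y => ζ (y 0)
        * ((2 * ψ (f y) * p (f y)) * ∑ j, a y i j * pd j f y))]
    · rw [pd_mul hζd (hgd.fun_mul (hF i)), pd_mul hgd (hF i), pd_comp_coord hζ,
        pd_comp (g := fun s => 2 * ψ s * p s) hg hfd]
      have : ∑ j, a x i j * pd i f x * pd j f x = pd i f x * ∑ j, a x i j * pd j f x := by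
        rw [Finset.mul_sum]; exact Finset.sum_congr rfl fun j _ => by ring
      rw [this]; ring
    · filter_upwards [(isOpen_strip hΩ).mem_nhds hx] with y hy
      simp [flux, hy]
  simp only [key, Finset.sum_add_distrib, ← Finset.mul_sum, ite_mul, zero_mul,
    Finset.sum_ite_eq', Finset.mem_univ, if_true]

end

/-! ### Energy inequality at a fixed time -/

lemma pd_eq_zero_of_eventually {n : ℕ} {i : Fin (n + 1)} {f : (Fin (n + 1) → ℝ) → ℝ}
    {x : Fin (n + 1) → ℝ} (h : ∀ᶠ y in nhds x, f y = 0) : pd i f x = 0 := by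
  rw [pd_congr (g := fun _ => 0) h]; simp [pd]

lemma Dset_subset_slab {n : ℕ} {Ω₀ : Set (Fin n → ℝ)} {R : ℝ} :
    Dset Ω₀ R ⊆ {x : Fin (n + 1) → ℝ | |x 0| ≤ R} ∩ closure (strip Ω₀) := fun _ hx =>
  ⟨abs_le.2 ⟨hx.1.1.le, hx.1.2.le⟩, subset_closure hx.2⟩

lemma isOpen_Dset {n : ℕ} {Ω₀ : Set (Fin n → ℝ)} (hΩ : IsOpen Ω₀) (R : ℝ) :
    IsOpen (Dset Ω₀ R) :=
  (isOpen_Ioo.preimage (continuous_apply (0 : Fin (n + 1)))).inter (isOpen_strip hΩ)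

lemma integrableOn_Dset {n : ℕ} {Ω₀ : Set (Fin n → ℝ)} (hb : Bornology.IsBounded Ω₀) {R : ℝ}
    {h : (Fin (n + 1) → ℝ) → ℝ} (hc : ContinuousOn h (closure (strip Ω₀))) :
    IntegrableOn h (Dset Ω₀ R) :=
  ((hc.mono inter_subset_right).integrableOn_compact (isCompact_slab hb R)).mono_set
    Dset_subset_slab

lemma lintegral_weight_eq {m : ℕ} {ζ : ℝ → ℝ} {h : (Fin (m + 1) → ℝ) → ℝ} (hζ : ∀ y, 0 ≤ ζ y)
    (h0 : ∀ x, 0 ≤ h x) (hi : Integrable fun x => ζ (x 0) * h x) :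
    ∫⁻ x, ENNReal.ofReal (ζ (x 0)) * ENNReal.ofReal (h x)
      = ENNReal.ofReal (∫ x, ζ (x 0) * h x) := by
  rw [ofReal_integral_eq_lintegral_ofReal hi (ae_of_all _ fun x => mul_nonneg (hζ _) (h0 _))]
  exact lintegral_congr fun x => (ENNReal.ofReal_mul (hζ _)).symm

/-- The energy inequality at a fixed time: the weighted integral of `∂ₜ (ψ(f)²) = 2 ψ p L f`
dissipates the weighted `L²` norm at rate `K`, up to an error controlled by the cutoff scale. -/
lemma energy_static {n : ℕ} {Ω₀ : Set (Fin n → ℝ)} (hΩ : IsOpen Ω₀)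
    (hbd : Bornology.IsBounded Ω₀) {V₀ ρ : ℝ} (hV₀ : 0 < V₀) (hρ : 0 ≤ ρ)
    (hρV : (2 * ρ) ^ n = 2 * V₀) (hvol : volume Ω₀ = ENNReal.ofReal V₀)
    {lam Lam e : ℝ} (hlam : 0 < lam) (hLam : 0 ≤ Lam) (he : 0 ≤ e)
    {a : (Fin (n + 1) → ℝ) → Fin (n + 1) → Fin (n + 1) → ℝ}
    {b : (Fin (n + 1) → ℝ) → Fin (n + 1) → ℝ} {c : (Fin (n + 1) → ℝ) → ℝ}
    (hg : GoodCoeffs Ω₀ lam Lam a b c) (hb : ∀ x ∈ strip Ω₀, ∀ i, |b x i| ≤ √e)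
    (hc : ∀ x ∈ strip Ω₀, c x ≤ 0)
    {f : (Fin (n + 1) → ℝ) → ℝ} {σ : ℝ} {ψ p : ℝ → ℝ} (hσ : 0 < σ) (hψ : TruncFn σ ψ p)
    (hf2 : ContDiffOn ℝ 2 f (strip Ω₀)) (hfc : ContinuousOn f (closure (strip Ω₀)))
    (hf0 : ∀ x ∈ frontier (strip Ω₀), f x = 0) {δ R K : ℝ} (hδ : 0 < δ) (hR : 0 < R)
    (hK : 0 ≤ K) (h1 : 2 * (n + 1) * e / lam ≤ K / 2)
    (h2 : 16 * (n + 1) * Lam ^ 2 * δ ^ 2 / lam ≤ K / 2)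
    (h3 : 2 * K * (2 * n * ρ ^ 2) ≤ lam)
    (hG : Integrable fun x : Fin (n + 1) → ℝ => eta δ R (x 0) ^ 2 *
      (strip Ω₀).indicator (fun x => 2 * ψ (f x) * p (f x) * Lop a b c f x) x) :
    ∫ x, eta δ R (x 0) ^ 2 *
      (strip Ω₀).indicator (fun x => 2 * ψ (f x) * p (f x) * Lop a b c f x) x
      ≤ -K * (∫ x, eta δ R (x 0) ^ 2 * truncExt Ω₀ ψ f x ^ 2)
        + K * (Real.cosh (δ * R))⁻¹ ^ 2 * ∫ x in Dset Ω₀ R, f x ^ 2 := by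
  set ε := (Real.cosh (δ * R))⁻¹ with hε
  have hε0 : 0 ≤ ε := inv_nonneg.2 (Real.cosh_pos _).le
  set W := truncExt Ω₀ ψ f with hW
  have hWc : ContDiff ℝ 1 W := contDiff_truncExt hΩ hσ hψ hf2 hfc hf0
  have hpdc : ∀ i, Continuous (pd i W) := fun i =>
    (hWc.continuous_fderiv (by norm_num)).clm_apply continuous_const
  have hηc : Continuous fun x : Fin (n + 1) → ℝ => eta δ R (x 0) ^ 2 :=
    ((continuous_eta δ R).comp (continuous_apply _)).pow 2
  have hηs : ContDiff ℝ 1 fun x : Fin (n + 1) → ℝ => eta δ R (x 0) ^ 2 :=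
    (contDiff_eta_sq δ R).comp (contDiff_apply ℝ ℝ 0)
  have hWz : ∀ x ∉ strip Ω₀, ∀ i, pd i W x = 0 := fun x hx i =>
    pd_eq_zero_of_eventually (eventually_indicator_eq_zero (isOpen_strip hΩ) hσ hfc hf0
      (fun _ _ h => hψ.psi_zero _ h.le) hx)
  have hFz : ∀ x ∉ strip Ω₀, ∀ i,
      pd i (fun y => eta δ R (y 0) ^ 2 * flux Ω₀ ψ p a f i y) x = 0 := fun x hx i => by
    refine pd_eq_zero_of_eventually ?_
    filter_upwards [eventually_indicator_eq_zero (isOpen_strip hΩ) hσ hfc hf0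
      (F := fun x => 2 * ψ (f x) * p (f x) * ∑ j, a x i j * pd j f x)
      (fun _ _ h => by simp [hψ.psi_zero _ h.le]) hx] with y hy
    rw [flux, hy, mul_zero]
  have hns : ∀ {x}, x ∉ closure (strip Ω₀) → x ∉ strip Ω₀ := fun h h' => h (subset_closure h')
  have iW : Integrable fun x => eta δ R (x 0) ^ 2 * W x ^ 2 :=
    (hηc.mul (hWc.continuous.pow 2)).integrable_of_hasCompactSupport
      (hasCompactSupport_eta_mul hbd hδ hR fun x hx => by
        simp [hW, truncExt_of_notMem (hns hx)])
  have iD : Integrable fun x => eta δ R (x 0) ^ 2 * ∑ i, pd i W x ^ 2 :=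
    (hηc.mul (continuous_finsetSum _ fun i _ => (hpdc i).pow 2)).integrable_of_hasCompactSupport
      (hasCompactSupport_eta_mul hbd hδ hR fun x hx => by simp [hWz x (hns hx)])
  have hYc : ∀ i, ContDiff ℝ 1 fun y => eta δ R (y 0) ^ 2 * flux Ω₀ ψ p a f i y := fun i =>
    hηs.mul (contDiff_flux hΩ hσ hψ hg.a_reg hf2 hfc hf0 i)
  have hYs : ∀ i, HasCompactSupport fun y : Fin (n + 1) → ℝ =>
      eta δ R (y 0) ^ 2 * flux Ω₀ ψ p a f i y := fun i =>
    hasCompactSupport_eta_mul hbd hδ hR fun x hx => indicator_of_notMem (hns hx) _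
  have iY : ∀ i, Integrable fun x => pd i (fun y => eta δ R (y 0) ^ 2 * flux Ω₀ ψ p a f i y) x :=
    fun i => (((hYc i).continuous_fderiv (by norm_num)).clm_apply
      continuous_const).integrable_of_hasCompactSupport ((hYs i).fderiv_apply (𝕜 := ℝ) _)
  have iE : Integrable ((Dset Ω₀ R).indicator fun x => W x ^ 2) :=
    (integrableOn_Dset hbd (hWc.continuous.pow 2).continuousOn).integrable_indicator
      (isOpen_Dset hΩ R).measurableSet
  set k1 := 2 * (n + 1) * e / lam with hk1
  set k2 := 16 * (n + 1) * Lam ^ 2 * δ ^ 2 / lam with hk2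
  have hk2' : 0 ≤ k2 := by positivity
  have pw : ∀ x : Fin (n + 1) → ℝ, eta δ R (x 0) ^ 2 *
      (strip Ω₀).indicator (fun x => 2 * ψ (f x) * p (f x) * Lop a b c f x) x
      ≤ (∑ i, pd i (fun y => eta δ R (y 0) ^ 2 * flux Ω₀ ψ p a f i y) x)
        - lam * (eta δ R (x 0) ^ 2 * ∑ i, pd i W x ^ 2)
        + (k1 + k2) * (eta δ R (x 0) ^ 2 * W x ^ 2)
        + k2 * ε ^ 2 * (Dset Ω₀ R).indicator (fun x => W x ^ 2) x := by
    intro x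
    by_cases hx : x ∈ strip Ω₀
    · have hder := (hasDerivAt_eta_sq δ R (x 0)).differentiableAt.hasDerivAt
      rw [div_flux hΩ hψ hg.a_reg hf2 hder hx, indicator_of_mem hx]
      simp only [hW, pd_truncExt hΩ hψ hf2 hx, truncExt_of_mem hx]
      have hzb := abs_deriv_eta_sq_le (R := R) hδ (x 0)
      rcases lt_or_ge |x 0| R with hxR | hxR
      · have hxD : x ∈ Dset Ω₀ R := ⟨abs_lt.1 hxR, hx⟩
        rw [indicator_of_mem hxD, truncExt_of_mem hx]
        have := energy_algebra (m := n + 1) (by omega) (A := a x) (β := b x)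
          (ξ := fun i => pd i f x) (ε := ε) (Dv := ∑ i, pd i (fun y => ∑ j, a y i j * pd j f y) x)
          (f := f x) (q := deriv p (f x)) (c := c x) 0 hlam hLam
          (hg.elliptic x hx _) (hg.a_bdd x hx) he (hb x hx) (eta_nonneg δ R (x 0)) hε0 hδ.le
          (hψ.psi_nonneg (f x)) (hψ.p_nonneg (f x)) (hψ.p_deriv_nonneg _) hzb (hc x hx) (by
            rcases le_or_gt (f x) σ with h | h
            · simp [hψ.psi_zero _ h]
            · exact mul_nonneg (mul_nonneg (hψ.psi_nonneg _) (hψ.p_nonneg _)) (hσ.trans h).le)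
        push_cast at this
        simp only [Lop]
        rw [← hk1, ← hk2] at this
        linarith
      · have hη := eta_eq_zero hδ hR hxR
        have hxD : x ∉ Dset Ω₀ R := fun h => not_lt.2 hxR (abs_lt.2 h.1)
        have hz0 : deriv (fun y => eta δ R y ^ 2) (x 0) = 0 := by
          rw [hη] at hzb; simpa using hzb
        rw [indicator_of_notMem hxD, hz0, hη]
        simp
    · have hxD : x ∉ Dset Ω₀ R := fun h => hx h.2
      have hWx : W x = 0 := truncExt_of_notMem hx
      simp [hx, hxD, hFz x hx, hWz x hx, hWx]
  have iT : Integrable fun x => (∑ i, pd i (fun y => eta δ R (y 0) ^ 2 * flux Ω₀ ψ p a f i y) x) :=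
    integrable_finsetSum _ fun i _ => iY i
  have i1 : Integrable fun x =>
      (∑ i, pd i (fun y => eta δ R (y 0) ^ 2 * flux Ω₀ ψ p a f i y) x)
        - lam * (eta δ R (x 0) ^ 2 * ∑ i, pd i W x ^ 2) := iT.sub (iD.const_mul lam)
  have i2 : Integrable fun x =>
      (∑ i, pd i (fun y => eta δ R (y 0) ^ 2 * flux Ω₀ ψ p a f i y) x)
        - lam * (eta δ R (x 0) ^ 2 * ∑ i, pd i W x ^ 2)
        + (k1 + k2) * (eta δ R (x 0) ^ 2 * W x ^ 2) := i1.add (iW.const_mul (k1 + k2))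
  have i3 := i2.add (iE.const_mul (k2 * ε ^ 2))
  have main := integral_mono hG i3 pw
  have hYz := fun i => integral_pd_eq_zero (i := i) (hYc i) (hYs i)
  have eR : ∫ x, ((∑ i, pd i (fun y => eta δ R (y 0) ^ 2 * flux Ω₀ ψ p a f i y) x)
        - lam * (eta δ R (x 0) ^ 2 * ∑ i, pd i W x ^ 2)
        + (k1 + k2) * (eta δ R (x 0) ^ 2 * W x ^ 2)
        + k2 * ε ^ 2 * (Dset Ω₀ R).indicator (fun x => W x ^ 2) x)
      = -(lam * ∫ x, eta δ R (x 0) ^ 2 * ∑ i, pd i W x ^ 2)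
        + (k1 + k2) * (∫ x, eta δ R (x 0) ^ 2 * W x ^ 2)
        + k2 * ε ^ 2 * ∫ x in Dset Ω₀ R, W x ^ 2 := by
    rw [integral_add i2 (iE.const_mul (k2 * ε ^ 2)), integral_add i1 (iW.const_mul (k1 + k2)), integral_sub iT (iD.const_mul lam),
      integral_finsetSum _ fun i _ => iY i, integral_const_mul, integral_const_mul,
      integral_const_mul, integral_indicator (isOpen_Dset hΩ R).measurableSet]
    simp [hYz]
  have main' := main.trans_eq eR
  set J := ∫ x, eta δ R (x 0) ^ 2 * W x ^ 2 with hJ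
  set I := ∫ x, eta δ R (x 0) ^ 2 * ∑ i, pd i W x ^ 2 with hI
  have hJ0 : 0 ≤ J := integral_nonneg fun x => by positivity
  have hI0 : 0 ≤ I := integral_nonneg fun x =>
    mul_nonneg (sq_nonneg _) (Finset.sum_nonneg fun i _ => sq_nonneg _)
  have hPo : J ≤ 2 * n * ρ ^ 2 * I := by
    have := poincare hΩ hV₀ hρ hρV hvol hWc (fun x hx => truncExt_of_notMem hx)
      (ζ := fun y => eta δ R y ^ 2) ((continuous_eta δ R).pow 2)
    rw [lintegral_weight_eq (ζ := fun y => eta δ R y ^ 2) (h := fun x => W x ^ 2)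
        (fun y => sq_nonneg _) (fun x => sq_nonneg _) iW,
      lintegral_weight_eq (ζ := fun y => eta δ R y ^ 2) (h := fun x => ∑ i, pd i W x ^ 2)
        (fun y => sq_nonneg _) (fun x => Finset.sum_nonneg fun i _ => sq_nonneg _) iD,
      ← ENNReal.ofReal_mul (by positivity)] at this
    exact (ENNReal.ofReal_le_ofReal_iff (by positivity)).1 this
  have hU : ∫ x in Dset Ω₀ R, W x ^ 2 ≤ ∫ x in Dset Ω₀ R, f x ^ 2 := by
    refine setIntegral_mono_on (integrableOn_Dset hbd (hWc.continuous.pow 2).continuousOn)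
      (integrableOn_Dset hbd (hfc.pow 2)) (isOpen_Dset hΩ R).measurableSet fun x hx => ?_
    rw [hW, truncExt_of_mem hx.2]
    exact hψ.sq_le hσ _
  have hU0 : 0 ≤ ∫ x in Dset Ω₀ R, f x ^ 2 := integral_nonneg fun x => sq_nonneg _
  have s1 : 2 * K * J ≤ lam * I := by
    calc 2 * K * J ≤ 2 * K * (2 * n * ρ ^ 2 * I) := by gcongr
      _ = (2 * K * (2 * n * ρ ^ 2)) * I := by ring
      _ ≤ lam * I := by gcongr
  have s2 : (k1 + k2) * J ≤ K * J := by
    have : k1 + k2 ≤ K := by linarith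
    gcongr
  have s3 : k2 * ε ^ 2 * (∫ x in Dset Ω₀ R, W x ^ 2) ≤ K * ε ^ 2 * ∫ x in Dset Ω₀ R, f x ^ 2 := by
    have : k2 ≤ K := by linarith
    gcongr
  linarith

/-! ### Differentiating the energy in time -/

lemma continuousOn_setIntegral_Dset {n : ℕ} {Ω₀ : Set (Fin n → ℝ)} (hΩ : IsOpen Ω₀)
    (hbd : Bornology.IsBounded Ω₀) {h : ℝ → (Fin (n + 1) → ℝ) → ℝ}
    (hc : ContinuousOn (fun q : ℝ × (Fin (n + 1) → ℝ) => h q.1 q.2)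
      (Iic (0 : ℝ) ×ˢ closure (strip Ω₀))) (R T : ℝ) :
    ContinuousOn (fun t => ∫ x in Dset Ω₀ R, h t x) (Icc T 0) := by
  have hcomp := isCompact_slab hbd R
  obtain ⟨M, hM⟩ := (isCompact_Icc (a := T) (b := 0)).prod hcomp |>.exists_bound_of_continuousOn
    (hc.mono (prod_mono Icc_subset_Iic_self inter_subset_right))
  have hslice : ∀ t ∈ Icc T 0, ContinuousOn (h t) (closure (strip Ω₀)) := fun t ht =>
    hc.comp (f := fun x => (t, x)) (by fun_prop) fun x hx => ⟨ht.2, hx⟩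
  refine continuousOn_of_dominated (bound := fun _ => M) (fun t ht => ?_) (fun t ht => ?_) ?_ ?_
  · exact (integrableOn_Dset hbd (hslice t ht)).aestronglyMeasurable
  · refine (ae_restrict_iff' (isOpen_Dset hΩ R).measurableSet).2 (ae_of_all _ fun x hx => ?_)
    exact hM (t, x) ⟨ht, Dset_subset_slab hx⟩
  · exact integrableOn_Dset (h := fun _ => M) hbd continuousOn_const
  · refine (ae_restrict_iff' (isOpen_Dset hΩ R).measurableSet).2 (ae_of_all _ fun x hx => ?_)
    exact hc.comp (f := fun t => (t, x)) (by fun_prop)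
      fun t ht => ⟨ht.2, (Dset_subset_slab hx).2⟩

lemma IsAncientSolution.slice {n : ℕ} {Ω₀ : Set (Fin n → ℝ)}
    {a : (Fin (n + 1) → ℝ) → Fin (n + 1) → Fin (n + 1) → ℝ}
    {b : (Fin (n + 1) → ℝ) → Fin (n + 1) → ℝ} {c : (Fin (n + 1) → ℝ) → ℝ}
    {u : ℝ → (Fin (n + 1) → ℝ) → ℝ} (hu : IsAncientSolution Ω₀ a b c u) {t : ℝ} (ht : t ≤ 0) :
    ContinuousOn (u t) (closure (strip Ω₀)) :=
  hu.cont.comp (f := fun x => (t, x)) (by fun_prop) fun _ hx => ⟨ht, hx⟩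

section
variable {n : ℕ} {Ω₀ : Set (Fin n → ℝ)} {lam Lam : ℝ}
  {a : (Fin (n + 1) → ℝ) → Fin (n + 1) → Fin (n + 1) → ℝ}
  {b : (Fin (n + 1) → ℝ) → Fin (n + 1) → ℝ} {c : (Fin (n + 1) → ℝ) → ℝ}
  {v : ℝ → (Fin (n + 1) → ℝ) → ℝ} {σ : ℝ} {ψ p : ℝ → ℝ} {δ R : ℝ}

/-- The weighted energy `∫ η² ψ(v(t))²`. -/
def energy (Ω₀ : Set (Fin n → ℝ)) (ψ : ℝ → ℝ) (v : ℝ → (Fin (n + 1) → ℝ) → ℝ) (δ R t : ℝ) : ℝ :=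
  ∫ x, eta δ R (x 0) ^ 2 * truncExt Ω₀ ψ (v t) x ^ 2

lemma energy_eq_setIntegral (hδ : 0 < δ) (hR : 0 < R) (hΩ : IsOpen Ω₀) (t : ℝ) :
    energy Ω₀ ψ v δ R t = ∫ x in Dset Ω₀ R, eta δ R (x 0) ^ 2 * ψ (v t x) ^ 2 := by
  rw [energy, ← setIntegral_eq_integral_of_forall_compl_eq_zero (s := Dset Ω₀ R)]
  · refine setIntegral_congr_fun (isOpen_Dset hΩ R).measurableSet fun x hx => ?_
    simp only [truncExt_of_mem (show x ∈ strip Ω₀ from hx.2)]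
  · intro x hx
    by_cases h : x ∈ strip Ω₀
    · have : R ≤ |x 0| := le_of_not_gt fun h' => hx ⟨abs_lt.1 h', h⟩
      simp [eta_eq_zero hδ hR this]
    · simp [truncExt_of_notMem h]

lemma continuousOn_energy (hΩ : IsOpen Ω₀) (hbd : Bornology.IsBounded Ω₀) (hδ : 0 < δ) (hR : 0 < R)
    (hv : IsAncientSolution Ω₀ a b c v) (hψ : TruncFn σ ψ p) (T : ℝ) :
    ContinuousOn (energy Ω₀ ψ v δ R) (Icc T 0) := by
  rw [funext (energy_eq_setIntegral (ψ := ψ) (v := v) hδ hR hΩ)]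
  refine continuousOn_setIntegral_Dset hΩ hbd (h := fun t x => eta δ R (x 0) ^ 2 * ψ (v t x) ^ 2)
    ?_ R T
  have h1 : Continuous fun q : ℝ × (Fin (n + 1) → ℝ) => eta δ R (q.2 0) ^ 2 := by
    have := continuous_eta δ R
    fun_prop
  exact h1.continuousOn.mul ((hψ.contDiff.continuous.comp_continuousOn hv.cont).pow 2)

lemma integrable_energy (hΩ : IsOpen Ω₀) (hbd : Bornology.IsBounded Ω₀) (hδ : 0 < δ) (hR : 0 < R)
    (hv : IsAncientSolution Ω₀ a b c v) (hσ : 0 < σ) (hψ : TruncFn σ ψ p) {t : ℝ} (ht : t ≤ 0) :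
    Integrable fun x => eta δ R (x 0) ^ 2 * truncExt Ω₀ ψ (v t) x ^ 2 := by
  have hW := contDiff_truncExt hΩ hσ hψ (hv.space_reg t ht) (hv.slice ht) (hv.bdry t ht)
  have hη := continuous_eta δ R
  have hWc := hW.continuous
  refine Continuous.integrable_of_hasCompactSupport (by fun_prop)
    (hasCompactSupport_eta_mul hbd hδ hR fun x hx => ?_)
  simp [truncExt_of_notMem fun h => hx (subset_closure h)]

/-- Uniform bound on the forward time difference quotients of the energy density: where the
truncation is active at some time in `[t, 0]` the point stays in a compact subset of the open strip,
on which the solution is Lipschitz forward in time. -/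
lemma quotient_bound (hΩ : IsOpen Ω₀) (hbd : Bornology.IsBounded Ω₀) (hlam : 0 < lam)
    (hδ : 0 < δ) (hR : 0 < R) (hg : GoodCoeffs Ω₀ lam Lam a b c)
    (hv : IsAncientSolution Ω₀ a b c v) (hσ : 0 < σ) (hψ : TruncFn σ ψ p) {t : ℝ} (ht : t ≤ 0) :
    ∃ B, ∀ s ∈ Ioc t 0, ∀ x : Fin (n + 1) → ℝ,
      |eta δ R (x 0) ^ 2 * ((s - t)⁻¹ * (truncExt Ω₀ ψ (v s) x ^ 2 - truncExt Ω₀ ψ (v t) x ^ 2))|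
        ≤ ({x : Fin (n + 1) → ℝ | |x 0| ≤ R} ∩ closure (strip Ω₀)).indicator (fun _ => B) x := by
  set Z := {x : Fin (n + 1) → ℝ | |x 0| ≤ R} ∩ closure (strip Ω₀) with hZ
  have hZc : IsCompact Z := isCompact_slab hbd R
  have hP : IsCompact (Icc t 0 ×ˢ Z) := isCompact_Icc.prod hZc
  have hcont : ContinuousOn (fun q : ℝ × (Fin (n + 1) → ℝ) => v q.1 q.2) (Icc t 0 ×ˢ Z) :=
    hv.cont.mono (prod_mono Icc_subset_Iic_self inter_subset_right)
  obtain ⟨M, hM⟩ := hP.exists_bound_of_continuousOn hcont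
  set A : Set (ℝ × (Fin (n + 1) → ℝ)) :=
    (Icc t 0 ×ˢ Z) ∩ (fun q : ℝ × (Fin (n + 1) → ℝ) => v q.1 q.2) ⁻¹' Ici σ with hA
  have hAc : IsCompact A :=
    hP.of_isClosed_subset (hcont.preimage_isClosed_of_isClosed hP.isClosed isClosed_Ici)
      inter_subset_left
  set K := Prod.snd '' A with hK
  have hKc : IsCompact K := hAc.image continuous_snd
  have hKs : K ⊆ strip Ω₀ := by
    rintro x ⟨⟨s, y⟩, ⟨⟨hs, hy⟩, hσv⟩, rfl⟩
    by_contra hx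
    have hfr : y ∈ frontier (strip Ω₀) := by
      rw [frontier, (isOpen_strip hΩ).interior_eq]; exact ⟨hy.2, hx⟩
    have := hv.bdry s hs.2 y hfr
    have h2 : σ ≤ v s y := hσv
    linarith
  obtain ⟨C₁, hC₁⟩ := forward_lipschitz hΩ hlam hg hv ht hKc hKs
  have hg0 : GoodCoeffs Ω₀ lam Lam a b (fun x => c x - 0) := by simpa using hg
  obtain ⟨C₂, hC₂⟩ := forward_lipschitz hΩ hlam hg0 (hv.rescale (-1) 0) ht hKc hKs
  set C := max (max C₁ C₂) 0 with hC
  have hC0 : 0 ≤ C := le_max_right _ _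
  have hlip : ∀ x ∈ K, ∀ s ∈ Icc t 0, |v s x - v t x| ≤ C * (s - t) := by
    intro x hx s hs
    have h0 : 0 ≤ s - t := sub_nonneg.2 hs.1
    have e1 : C₁ * (s - t) ≤ C * (s - t) :=
      mul_le_mul_of_nonneg_right ((le_max_left _ _).trans (le_max_left _ _)) h0
    have e2 : C₂ * (s - t) ≤ C * (s - t) :=
      mul_le_mul_of_nonneg_right ((le_max_right _ _).trans (le_max_left _ _)) h0
    have h1 := hC₁ x hx s hs
    have h2 := hC₂ x hx s hs
    simp only [neg_zero, zero_mul, Real.exp_zero, mul_one, neg_mul, one_mul] at h2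
    rw [abs_le]; constructor <;> linarith
  refine ⟨C * (2 * |M|), fun s hs x => ?_⟩
  have hst : 0 < s - t := sub_pos.2 hs.1
  have hsI : s ∈ Icc t 0 := ⟨hs.1.le, hs.2⟩
  have htI : t ∈ Icc t 0 := ⟨le_rfl, ht⟩
  by_cases hxZ : x ∈ Z
  · rw [indicator_of_mem hxZ]
    by_cases hxs : x ∈ strip Ω₀
    · rw [truncExt_of_mem hxs, truncExt_of_mem hxs]
      by_cases hxK : x ∈ K
      · have hb : ∀ r ∈ Icc t 0, ψ (v r x) ≤ |M| := fun r hr =>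
          (hψ.abs_le hσ _).trans ((hM (r, x) ⟨hr, hxZ⟩).trans (le_abs_self M))
        have h1 : |ψ (v s x) - ψ (v t x)| ≤ C * (s - t) :=
          (hψ.lipschitz _ _).trans (hlip x hxK s hsI)
        have h2 : |ψ (v s x) + ψ (v t x)| ≤ 2 * |M| := by
          rw [abs_of_nonneg (add_nonneg (hψ.psi_nonneg _) (hψ.psi_nonneg _))]
          linarith [hb s hsI, hb t htI]
        have h3 : |ψ (v s x) ^ 2 - ψ (v t x) ^ 2| ≤ (C * (2 * |M|)) * (s - t) := by
          rw [sq_sub_sq, abs_mul]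
          calc _ ≤ 2 * |M| * (C * (s - t)) := by gcongr
            _ = _ := by ring
        rw [abs_mul, abs_mul, abs_of_pos (inv_pos.2 hst), abs_of_nonneg (sq_nonneg (eta _ _ _))]
        have h4 : (s - t)⁻¹ * |ψ (v s x) ^ 2 - ψ (v t x) ^ 2| ≤ C * (2 * |M|) := by
          rw [inv_mul_le_iff₀ hst]; linarith
        have h5 : eta δ R (x 0) ^ 2 ≤ 1 := pow_le_one₀ (eta_nonneg _ _ _) (eta_le_one _ _ _)
        calc _ ≤ 1 * (C * (2 * |M|)) := by gcongr
          _ = _ := one_mul _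
      · have hz : ∀ r ∈ Icc t 0, ψ (v r x) = 0 := fun r hr => by
          refine hψ.psi_zero _ (le_of_not_ge fun h => hxK ⟨(r, x), ⟨⟨hr, hxZ⟩, h⟩, rfl⟩)
        rw [hz s hsI, hz t htI]
        simp only [sub_self, mul_zero, abs_zero]
        positivity
    · simp only [truncExt_of_notMem hxs, sub_self, mul_zero, abs_zero]
      positivity
  · rw [indicator_of_notMem hxZ]
    by_cases hxs : x ∈ strip Ω₀
    · have : R ≤ |x 0| := le_of_not_ge fun h' => hxZ ⟨h', subset_closure hxs⟩
      simp [eta_eq_zero hδ hR this]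
    · simp [truncExt_of_notMem hxs]

/-- Right differentiability of the energy, by dominated convergence. Integrability of the derivative
density is part of the conclusion: `b` and `c` are not assumed measurable, but the density is an
almost everywhere limit of measurable difference quotients. -/
lemma hasDerivWithinAt_energy (hΩ : IsOpen Ω₀) (hbd : Bornology.IsBounded Ω₀) (hlam : 0 < lam)
    (hδ : 0 < δ) (hR : 0 < R) (hg : GoodCoeffs Ω₀ lam Lam a b c)
    (hv : IsAncientSolution Ω₀ a b c v) (hσ : 0 < σ) (hψ : TruncFn σ ψ p) {t : ℝ} (ht : t < 0) :
    (Integrable fun x : Fin (n + 1) → ℝ => eta δ R (x 0) ^ 2 *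
      (strip Ω₀).indicator (fun x => 2 * ψ (v t x) * p (v t x) * Lop a b c (v t) x) x) ∧
    HasDerivWithinAt (energy Ω₀ ψ v δ R) (∫ x, eta δ R (x 0) ^ 2 *
      (strip Ω₀).indicator (fun x => 2 * ψ (v t x) * p (v t x) * Lop a b c (v t) x) x)
      (Ici t) t := by
  obtain ⟨B, hB⟩ := quotient_bound hΩ hbd hlam hδ hR hg hv hσ hψ ht.le
  have hZc := isCompact_slab hbd R
  have hBi : Integrable (({x : Fin (n + 1) → ℝ | |x 0| ≤ R} ∩ closure (strip Ω₀)).indicator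
      fun _ => B) :=
    (integrableOn_const hZc.measure_lt_top.ne).integrable_indicator hZc.measurableSet
  have hev : ∀ᶠ s in nhdsWithin t (Ioi t), s ∈ Ioc t 0 := Ioc_mem_nhdsGT ht
  have hInt := fun s (hs : s ≤ 0) => integrable_energy hΩ hbd hδ hR hv hσ hψ hs
  have hmeas : ∀ᶠ s in nhdsWithin t (Ioi t), AEStronglyMeasurable (fun x : Fin (n + 1) → ℝ =>
      eta δ R (x 0) ^ 2
        * ((s - t)⁻¹ * (truncExt Ω₀ ψ (v s) x ^ 2 - truncExt Ω₀ ψ (v t) x ^ 2))) volume := by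
    filter_upwards [hev] with s hs
    have := (((hInt s hs.2).sub (hInt t ht.le)).const_mul (s - t)⁻¹).aestronglyMeasurable
    refine this.congr (ae_of_all _ fun x => ?_)
    simp only [Pi.sub_apply]; ring
  have hlim : ∀ x : Fin (n + 1) → ℝ, Tendsto (fun s => eta δ R (x 0) ^ 2
        * ((s - t)⁻¹ * (truncExt Ω₀ ψ (v s) x ^ 2 - truncExt Ω₀ ψ (v t) x ^ 2)))
      (nhdsWithin t (Ioi t)) (nhds (eta δ R (x 0) ^ 2 *
      (strip Ω₀).indicator (fun x => 2 * ψ (v t x) * p (v t x) * Lop a b c (v t) x) x)) := by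
    intro x
    refine Tendsto.const_mul _ ?_
    by_cases hx : x ∈ strip Ω₀
    · simp only [truncExt_of_mem hx, indicator_of_mem hx]
      have h1 := ((hv.pde t ht.le x hx).hasDerivAt (Iic_mem_nhds ht))
      have h2 := ((hψ.hasDeriv (v t x)).comp t h1).pow 2
      have h3 := h2.hasDerivWithinAt (s := Ioi t)
      rw [hasDerivWithinAt_iff_tendsto_slope' (by simp)] at h3
      refine Tendsto.congr (fun s => ?_) (h3.trans_eq ?_)
      · simp [slope_def_module]
      · simp; ring_nf
    · simp [truncExt_of_notMem hx, hx]
  have hbound : ∀ᶠ s in nhdsWithin t (Ioi t), ∀ᵐ x : Fin (n + 1) → ℝ,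
      ‖eta δ R (x 0) ^ 2
        * ((s - t)⁻¹ * (truncExt Ω₀ ψ (v s) x ^ 2 - truncExt Ω₀ ψ (v t) x ^ 2))‖
        ≤ ({x : Fin (n + 1) → ℝ | |x 0| ≤ R} ∩ closure (strip Ω₀)).indicator (fun _ => B) x := by
    filter_upwards [hev] with s hs
    exact ae_of_all _ fun x => hB s hs x
  refine ⟨?_, ?_⟩
  · obtain ⟨ns, hns, hnm⟩ := exists_seq_forall_of_frequently hmeas.frequently
    refine hBi.mono' (aestronglyMeasurable_of_tendsto_ae atTop hnm
      (ae_of_all _ fun x => (hlim x).comp hns)) (ae_of_all _ fun x => ?_)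
    refine le_of_tendsto (hlim x).norm ?_
    filter_upwards [hev] with s hs using hB s hs x
  · rw [← hasDerivWithinAt_Ioi_iff_Ici, hasDerivWithinAt_iff_tendsto_slope' (by simp)]
    refine Tendsto.congr' ?_ (tendsto_integral_filter_of_dominated_convergence _ hmeas hbound hBi
      (ae_of_all _ hlim))
    filter_upwards [hev] with s hs
    rw [slope_def_module, energy, energy, ← integral_sub (hInt s hs.2) (hInt t ht.le), smul_eq_mul,
      ← integral_const_mul]
    exact integral_congr_ae (ae_of_all _ fun x => by ring)

end

/-! ### Integration in time -/

section
variable {n : ℕ} {Ω₀ : Set (Fin n → ℝ)} {lam Lam : ℝ}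
  {a : (Fin (n + 1) → ℝ) → Fin (n + 1) → Fin (n + 1) → ℝ}
  {b : (Fin (n + 1) → ℝ) → Fin (n + 1) → ℝ} {c : (Fin (n + 1) → ℝ) → ℝ}
  {u v : ℝ → (Fin (n + 1) → ℝ) → ℝ} {σ : ℝ} {ψ p : ℝ → ℝ} {δ R : ℝ}

lemma energy_nonneg (t : ℝ) : 0 ≤ energy Ω₀ ψ v δ R t := integral_nonneg fun x => by positivity

lemma energy_le (hΩ : IsOpen Ω₀) (hbd : Bornology.IsBounded Ω₀) (hδ : 0 < δ) (hR : 0 < R)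
    (hv : IsAncientSolution Ω₀ a b c v) (hσ : 0 < σ) (hψ : TruncFn σ ψ p) {t : ℝ} (ht : t ≤ 0) :
    energy Ω₀ ψ v δ R t ≤ ∫ x in Dset Ω₀ R, v t x ^ 2 := by
  rw [energy_eq_setIntegral hδ hR hΩ]
  have h1 : Continuous fun x : Fin (n + 1) → ℝ => eta δ R (x 0) ^ 2 := by
    have := continuous_eta δ R
    fun_prop
  refine setIntegral_mono_on (integrableOn_Dset hbd (h1.continuousOn.mul
      ((hψ.contDiff.continuous.comp_continuousOn (hv.slice ht)).pow 2)))
    (integrableOn_Dset hbd ((hv.slice ht).pow 2)) (isOpen_Dset hΩ R).measurableSet fun x _ => ?_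
  have h5 : eta δ R (x 0) ^ 2 ≤ 1 := pow_le_one₀ (eta_nonneg _ _ _) (eta_le_one _ _ _)
  calc _ ≤ 1 * v t x ^ 2 := mul_le_mul h5 (hψ.sq_le hσ _) (sq_nonneg _) zero_le_one
    _ = _ := one_mul _

/-- Monotonicity in `R`, which bounds the energy from below independently of `R`. -/
lemma energy_mono (hΩ : IsOpen Ω₀) (hbd : Bornology.IsBounded Ω₀) (hδ : 0 < δ) (hR : 0 < R)
    {R' : ℝ} (hRR : R ≤ R') (hv : IsAncientSolution Ω₀ a b c v) (hσ : 0 < σ)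
    (hψ : TruncFn σ ψ p) {t : ℝ} (ht : t ≤ 0) :
    energy Ω₀ ψ v δ R t ≤ energy Ω₀ ψ v δ R' t := by
  refine integral_mono (integrable_energy hΩ hbd hδ hR hv hσ hψ ht)
    (integrable_energy hΩ hbd hδ (hR.trans_le hRR) hv hσ hψ ht) fun x => ?_
  have := eta_mono hR.le hRR hδ (x 0)
  have h0 := eta_nonneg δ R (x 0)
  dsimp only
  gcongr

lemma energy_pos (hΩ : IsOpen Ω₀) (hbd : Bornology.IsBounded Ω₀) (hδ : 0 < δ) (hR : 0 < R)
    (hv : IsAncientSolution Ω₀ a b c v) (hσ : 0 < σ) (hψ : TruncFn σ ψ p) {t : ℝ} (ht : t ≤ 0)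
    {x : Fin (n + 1) → ℝ} (hx : x ∈ strip Ω₀) (hxR : |x 0| < R) (hvx : σ < v t x) :
    0 < energy Ω₀ ψ v δ R t := by
  have hW := (contDiff_truncExt hΩ hσ hψ (hv.space_reg t ht) (hv.slice ht)
    (hv.bdry t ht)).continuous
  have hη := continuous_eta δ R
  refine Continuous.integral_pos_of_hasCompactSupport_nonneg_nonzero (x := x) (by fun_prop)
    (hasCompactSupport_eta_mul hbd hδ hR fun x hx => ?_) (fun x => by positivity) ?_
  · simp [truncExt_of_notMem fun h => hx (subset_closure h)]
  · rw [truncExt_of_mem hx]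
    have h1 := eta_pos hδ hxR
    have h2 := hψ.psi_pos _ hvx
    positivity

lemma setIntegral_Qset (hbd : Bornology.IsBounded Ω₀) (hu : IsAncientSolution Ω₀ a b c u) :
    ∫ q in Qset Ω₀ R, u q.1 q.2 ^ 2
      = ∫ t in (-R ^ 2)..0, ∫ x in Dset Ω₀ R, u t x ^ 2 := by
  have hR2 : -R ^ 2 ≤ 0 := by nlinarith [sq_nonneg R]
  rw [intervalIntegral.integral_of_le hR2, Qset, Measure.volume_eq_prod, setIntegral_prod]
  have hP : IsCompact (Icc (-R ^ 2) 0 ×ˢ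
    ({x : Fin (n + 1) → ℝ | |x 0| ≤ R} ∩ closure (strip Ω₀))) :=
      isCompact_Icc.prod (isCompact_slab hbd R)
  rw [← Measure.volume_eq_prod]
  exact (((hu.cont.mono (prod_mono Icc_subset_Iic_self inter_subset_right)).pow
    2).integrableOn_compact hP).mono_set (prod_mono Ioc_subset_Icc_self Dset_subset_slab)

/-- Integrated form of the energy inequality for `v = ± e^{-et} u`: multiplying the energy by the
weight `e^{Kt} - e^{-KR²}`, which vanishes at `t = -R²`, and integrating from `-R²`. -/
lemma growth_bound (hΩ : IsOpen Ω₀)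
    (hbd : Bornology.IsBounded Ω₀) {V₀ ρ : ℝ} (hV₀ : 0 < V₀) (hρ : 0 ≤ ρ)
    (hρV : (2 * ρ) ^ n = 2 * V₀) (hvol : volume Ω₀ = ENNReal.ofReal V₀)
    {e : ℝ} (hlam : 0 < lam) (hLam : 0 ≤ Lam) (he : 0 ≤ e)
    (hg : GoodCoeffs Ω₀ lam Lam a b c) (hs : Smallness Ω₀ b c e)
    (hσ : 0 < σ) (hψ : TruncFn σ ψ p) {K k : ℝ} (hk : k ^ 2 = 1) (hδ : 0 < δ) (hR : 0 < R)
    (hK : 0 ≤ K) (h1 : 2 * (n + 1) * e / lam ≤ K / 2)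
    (h2 : 16 * (n + 1) * Lam ^ 2 * δ ^ 2 / lam ≤ K / 2)
    (h3 : 2 * K * (2 * n * ρ ^ 2) ≤ lam) (h4 : 4 * e ≤ K)
    (hu : IsAncientSolution Ω₀ a b c u) {t₀ : ℝ} (ht₀ : t₀ ∈ Icc (-R ^ 2) 0) :
    (Real.exp (K * t₀) - Real.exp (-(K * R ^ 2)))
        * energy Ω₀ ψ (fun t x => k * Real.exp (-e * t) * u t x) δ R t₀
      ≤ K * (Real.exp (-(K * R ^ 2 / 2)) + (Real.cosh (δ * R))⁻¹ ^ 2)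
        * ∫ q in Qset Ω₀ R, u q.1 q.2 ^ 2 := by
  set v : ℝ → (Fin (n + 1) → ℝ) → ℝ := fun t x => k * Real.exp (-e * t) * u t x with hvdef
  have hv : IsAncientSolution Ω₀ a b (fun x => c x - e) v := hu.rescale k e
  have hg' : GoodCoeffs Ω₀ lam Lam a b (fun x => c x - e) :=
    ⟨hg.elliptic, hg.a_bdd, hg.a_reg, hg.b_bdd, by
      obtain ⟨M, hM⟩ := hg.c_bdd
      exact ⟨M + |e|, fun x hx => (abs_sub _ _).trans (by linarith [hM x hx])⟩⟩
  set ε := (Real.cosh (δ * R))⁻¹ with hε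
  set U : ℝ → ℝ := fun t => ∫ x in Dset Ω₀ R, u t x ^ 2 with hU
  have hU0 : ∀ t, 0 ≤ U t := fun t => integral_nonneg fun x => sq_nonneg _
  have hVU : ∀ t, ∫ x in Dset Ω₀ R, v t x ^ 2 = Real.exp (-(2 * e * t)) * U t := by
    intro t
    rw [hU, ← integral_const_mul]
    refine integral_congr_ae (ae_of_all _ fun x => ?_)
    simp only [hvdef, mul_pow, hk, one_mul]
    congr 1
    rw [← Real.exp_nat_mul]; congr 1; push_cast; ring
  have hUc : ContinuousOn U (Icc (-R ^ 2) 0) :=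
    continuousOn_setIntegral_Dset hΩ hbd (h := fun t x => u t x ^ 2) (hu.cont.pow 2) R _
  have hR2 : -R ^ 2 ≤ 0 := by nlinarith [sq_nonneg R]
  set Ue : ℝ → ℝ := IccExtend hR2 ((Icc (-R ^ 2) 0).domRestrict U) with hUe
  have hUec : Continuous Ue := (continuousOn_iff_continuous_domRestrict.1 hUc).Icc_extend'
  have hUeq : ∀ t ∈ Icc (-R ^ 2) 0, Ue t = U t := fun t ht => by
    rw [hUe, IccExtend_of_mem _ _ ht]; rfl
  have hUe0 : ∀ t, 0 ≤ Ue t := fun t => hU0 _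
  set D := K * (Real.exp (-(K * R ^ 2 / 2)) + ε ^ 2) with hD
  have hD0 : 0 ≤ D := by positivity
  set E := Real.exp (-(K * R ^ 2)) with hE
  set J := energy Ω₀ ψ v δ R with hJ
  have hderω : ∀ t, HasDerivAt (fun t => Real.exp (K * t) - E) (K * Real.exp (K * t)) t := by
    intro t
    have h1 : HasDerivAt (fun t : ℝ => K * t) K t := by simpa using (hasDerivAt_id t).const_mul K
    exact (h1.exp.sub_const E).congr_deriv (by ring)
  have hBder : ∀ t, HasDerivAt (fun t => D * ∫ s in (-R ^ 2)..t, Ue s) (D * Ue t) t := fun t =>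
    (intervalIntegral.integral_hasDerivAt_right (hUec.intervalIntegrable _ _)
      (hUec.stronglyMeasurableAtFilter _ _) hUec.continuousAt).const_mul D
  have key := image_le_of_deriv_right_le_deriv_boundary (a := -R ^ 2) (b := 0)
    (f := fun t => (Real.exp (K * t) - E) * J t)
    (f' := fun t => K * Real.exp (K * t) * J t + (Real.exp (K * t) - E) *
      ∫ x, eta δ R (x 0) ^ 2 * (strip Ω₀).indicator
        (fun x => 2 * ψ (v t x) * p (v t x) * Lop a b (fun x => c x - e) (v t) x) x)
    (B := fun t => D * ∫ s in (-R ^ 2)..t, Ue s) (B' := fun t => D * Ue t)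
    (ContinuousOn.mul (by fun_prop) (continuousOn_energy hΩ hbd hδ hR hv hψ _))
    (fun t ht => (hderω t).hasDerivWithinAt.fun_mul
      (hasDerivWithinAt_energy hΩ hbd hlam hδ hR hg' hv hσ hψ ht.2).2)
    (by simp [hE])
    (fun t _ => (hBder t).continuousAt.continuousWithinAt)
    (fun t _ => (hBder t).hasDerivWithinAt)
    (fun t ht => ?_)
  · refine (key ht₀).trans ?_
    rw [setIntegral_Qset hbd hu]
    refine mul_le_mul_of_nonneg_left ?_ hD0
    have e1 : ∫ t in (-R ^ 2)..0, ∫ x in Dset Ω₀ R, u t x ^ 2 = ∫ t in (-R ^ 2)..0, Ue t := by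
      refine intervalIntegral.integral_congr fun t ht => ?_
      rw [uIcc_of_le hR2] at ht
      exact (hUeq t ht).symm
    rw [e1]
    refine intervalIntegral.integral_mono_interval le_rfl ht₀.1 ht₀.2 (ae_of_all _ fun t => hUe0 t)
      (hUec.intervalIntegrable _ _)
  · have htI : t ∈ Icc (-R ^ 2) 0 := ⟨ht.1, ht.2.le⟩
    have hstat := energy_static hΩ hbd hV₀ hρ hρV hvol hlam hLam he hg'
      (fun x hx => (hs x hx).1) (fun x hx => sub_nonpos.2 (hs x hx).2) hσ hψ
      (hv.space_reg t ht.2.le) (hv.slice ht.2.le) (hv.bdry t ht.2.le) hδ hR hK h1 h2 h3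
      (hasDerivWithinAt_energy hΩ hbd hlam hδ hR hg' hv hσ hψ ht.2).1
    have hJV : J t ≤ Real.exp (-(2 * e * t)) * U t := by
      rw [← hVU]; exact energy_le hΩ hbd hδ hR hv hσ hψ ht.2.le
    rw [hVU] at hstat
    set G := ∫ x, eta δ R (x 0) ^ 2 * (strip Ω₀).indicator
        (fun x => 2 * ψ (v t x) * p (v t x) * Lop a b (fun x => c x - e) (v t) x) x
    have hJ' : ∫ x, eta δ R (x 0) ^ 2 * truncExt Ω₀ ψ (v t) x ^ 2 = J t := rfl
    rw [hJ'] at hstat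
    set X := Real.exp (-(2 * e * t)) with hX
    have hω0 : 0 ≤ Real.exp (K * t) - E := by
      rw [hE, sub_nonneg, Real.exp_le_exp]; nlinarith [ht.1]
    have q1 : E * X ≤ Real.exp (-(K * R ^ 2 / 2)) := by
      rw [hE, hX, ← Real.exp_add, Real.exp_le_exp]; nlinarith [ht.1, sq_nonneg R]
    have q2 : Real.exp (K * t) * X ≤ 1 := by
      rw [hX, ← Real.exp_add, Real.exp_le_one_iff]; nlinarith [ht.2]
    have hE0 : 0 < E := Real.exp_pos _
    have hX0 : 0 < X := Real.exp_pos _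
    rw [hUeq t htI]
    calc K * Real.exp (K * t) * J t + (Real.exp (K * t) - E) * G
        ≤ K * Real.exp (K * t) * J t
          + (Real.exp (K * t) - E) * (-K * J t + K * ε ^ 2 * (X * U t)) := by gcongr
      _ = K * (E * J t) + K * ε ^ 2 * ((Real.exp (K * t) - E) * X * U t) := by ring
      _ ≤ K * (E * (X * U t)) + K * ε ^ 2 * (1 * U t) := by
          have := hU0 t
          have : (Real.exp (K * t) - E) * X ≤ 1 := by nlinarith [mul_pos hE0 hX0]
          gcongr
      _ = K * (E * X + ε ^ 2) * U t := by ring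
      _ ≤ D * U t := by
          have := hU0 t
          rw [hD]; gcongr

end

/-! ### Exponential growth -/

/-- The rate `2δ` in the hypothesis leaves room to absorb the constants, so that `δ` is a lower
bound without any loss once `R` is large. -/
lemma eventually_le_log {F : ℝ → ℝ} {m K δ : ℝ} (hm : 0 < m) (hK : 0 < K) (hδ : 0 < δ)
    (hF : ∀ᶠ R in atTop, m ≤ K * Real.exp (-(2 * (δ * R))) * F R) :
    ∀ᶠ R in atTop, δ ≤ R⁻¹ * Real.log (F R) := by
  filter_upwards [hF, eventually_gt_atTop 0, eventually_ge_atTop (-Real.log (m / K) / δ)]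
    with R h hR hR'
  have h1 : m / K * Real.exp (2 * (δ * R)) ≤ F R := by
    rw [Real.exp_neg] at h
    have hE := Real.exp_pos (2 * (δ * R))
    rw [div_mul_eq_mul_div, div_le_iff₀ hK]
    calc m * Real.exp (2 * (δ * R))
        ≤ K * (Real.exp (2 * (δ * R)))⁻¹ * F R * Real.exp (2 * (δ * R)) := by gcongr
      _ = F R * K := by field_simp
  have h2 := Real.log_le_log (by positivity) h1
  rw [Real.log_mul (by positivity) (by positivity), Real.log_exp] at h2
  rw [div_le_iff₀ hδ] at hR'
  rw [inv_mul_eq_div, le_div_iff₀ hR]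
  nlinarith

/-- Any nonzero ancient solution grows at least exponentially:
`liminf_{R→∞} R⁻¹ log ∫_{Q_R} u² ≥ 1/r₀`. -/
theorem liminf_exponential_growth
    (n : ℕ) (hn : 1 ≤ n) (lam V₀ : ℝ) (hlam : 0 < lam) (hV₀ : 0 < V₀) :
    ∃ ε₀ > (0 : ℝ), ∀ Lam : ℝ, lam < Lam →
    ∃ r₀ > (0 : ℝ), ∀ Ω₀ : Set (Fin n → ℝ), IsOpen Ω₀ → Ω₀.Nonempty →
      Bornology.IsBounded Ω₀ → volume Ω₀ = ENNReal.ofReal V₀ →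
    ∀ a b c, GoodCoeffs Ω₀ lam Lam a b c → Smallness Ω₀ b c ε₀ →
    ∀ u : ℝ → (Fin (n + 1) → ℝ) → ℝ, IsAncientSolution Ω₀ a b c u →
    (∃ t ≤ (0 : ℝ), ∃ x ∈ strip Ω₀, u t x ≠ 0) →
      ((1 / r₀ : ℝ) : EReal) ≤
        Filter.liminf
          (fun R : ℝ =>
            ((R⁻¹ * Real.log (∫ p in Qset Ω₀ R, u p.1 p.2 ^ 2) : ℝ) : EReal))
          Filter.atTop := by
  have hn0 : (0 : ℝ) < n := by exact_mod_cast hn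
  -- `ρ` is half the side of a cube of volume `2 V₀`; it sets the Poincaré constant.
  obtain ⟨ρ, hρ, hρV⟩ : ∃ ρ : ℝ, 0 < ρ ∧ (2 * ρ) ^ n = 2 * V₀ := by
    refine ⟨(2 * V₀) ^ ((n : ℝ)⁻¹) / 2, by positivity, ?_⟩
    rw [mul_div_cancel₀ _ two_ne_zero, Real.rpow_inv_natCast_pow (by positivity) (by omega)]
  set K := lam / (4 * n * ρ ^ 2) with hK
  have hK0 : 0 < K := by positivity
  set e := min (K * lam / (4 * (n + 1))) (K / 4) with he
  have he0 : 0 < e := by positivity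
  refine ⟨e, he0, fun Lam hLl => ?_⟩
  have hLam : 0 < Lam := hlam.trans hLl
  set δ := √(K * lam / (32 * (n + 1) * Lam ^ 2)) with hδd
  have hδ : 0 < δ := by positivity
  have hδ2 : δ ^ 2 = K * lam / (32 * (n + 1) * Lam ^ 2) := Real.sq_sqrt (by positivity)
  refine ⟨1 / δ, by positivity, ?_⟩
  intro Ω₀ hΩ _ hbd hvol a b c hg hs u hu ⟨t₀, ht₀, x, hx, hux⟩
  rw [one_div_one_div]
  have h1 : 2 * (n + 1) * e / lam ≤ K / 2 := by
    have : e ≤ K * lam / (4 * (n + 1)) := min_le_left _ _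
    rw [le_div_iff₀ (by positivity)] at this
    rw [div_le_iff₀ hlam]; linarith
  have h2 : 16 * (n + 1) * Lam ^ 2 * δ ^ 2 / lam ≤ K / 2 := by
    rw [hδ2]; apply le_of_eq; field_simp; norm_num
  have h3 : 2 * K * (2 * n * ρ ^ 2) ≤ lam := by
    rw [hK]; apply le_of_eq; field_simp; norm_num
  have h4 : 4 * e ≤ K := by linarith [min_le_right (K * lam / (4 * (n + 1))) (K / 4)]
  -- A sign `k` makes the rescaled solution positive at the given point.
  obtain ⟨k, hk, hku⟩ : ∃ k : ℝ, k ^ 2 = 1 ∧ 0 < k * Real.exp (-e * t₀) * u t₀ x := by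
    rcases lt_or_gt_of_ne hux with h | h
    · refine ⟨-1, by norm_num, ?_⟩
      have := mul_pos (Real.exp_pos (-e * t₀)) (neg_pos.2 h)
      linarith
    · exact ⟨1, by norm_num, by positivity⟩
  set v : ℝ → (Fin (n + 1) → ℝ) → ℝ := fun t x => k * Real.exp (-e * t) * u t x with hv
  have hvs : IsAncientSolution Ω₀ a b (fun x => c x - e) v := hu.rescale k e
  have hσ : 0 < v t₀ x / 2 := half_pos hku
  obtain ⟨ψ, p, hψ⟩ := exists_trunc (v t₀ x / 2)
  have hR1 : 0 < |x 0| + 1 := by positivity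
  have hj := energy_pos hΩ hbd hδ hR1 hvs hσ hψ ht₀ hx (lt_add_one _) (half_lt_self hku)
  set j := energy Ω₀ ψ v δ (|x 0| + 1) t₀
  have hlim : Tendsto (fun R : ℝ => Real.exp (-(K * R ^ 2))) atTop (nhds 0) :=
    Real.tendsto_exp_neg_atTop_nhds_zero.comp
      ((tendsto_pow_atTop two_ne_zero).const_mul_atTop hK0)
  have hm : 0 < Real.exp (K * t₀) / 2 * j := by positivity
  refine le_liminf_of_le (by isBoundedDefault) ?_
  refine (eventually_le_log (F := fun R => ∫ p in Qset Ω₀ R, u p.1 p.2 ^ 2) hm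
    (by positivity : 0 < 5 * K) hδ ?_).mono fun R h => EReal.coe_le_coe_iff.2 h
  filter_upwards [eventually_ge_atTop (|x 0| + 1), eventually_ge_atTop (1 - t₀),
    eventually_ge_atTop (4 * δ / K),
    hlim.eventually (gt_mem_nhds (half_pos (Real.exp_pos (K * t₀))))] with R hRx hRt hRδ hRe
  have hR0 : 0 < R := hR1.trans_le hRx
  have hb := growth_bound hΩ hbd hV₀ hρ.le hρV hvol hlam hLam.le he0.le hg hs hσ hψ hk hδ hR0
    hK0.le h1 h2 h3 h4 hu (t₀ := t₀) ⟨by nlinarith, ht₀⟩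
  have hmono := energy_mono hΩ hbd hδ hR1 hRx hvs hσ hψ ht₀
  have hF : 0 ≤ ∫ q in Qset Ω₀ R, u q.1 q.2 ^ 2 := integral_nonneg fun _ => sq_nonneg _
  have hc : (Real.cosh (δ * R))⁻¹ ^ 2 ≤ 4 * Real.exp (-(2 * (δ * R))) := by
    calc (Real.cosh (δ * R))⁻¹ ^ 2 ≤ (2 * Real.exp (-(δ * R))) ^ 2 :=
          pow_le_pow_left₀ (inv_nonneg.2 (Real.cosh_pos _).le) (inv_cosh_le δ R) 2
      _ = _ := by
          rw [mul_pow, ← Real.exp_nat_mul]; norm_num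
  have hq : Real.exp (-(K * R ^ 2 / 2)) ≤ Real.exp (-(2 * (δ * R))) := by
    rw [div_le_iff₀ hK0] at hRδ
    apply Real.exp_le_exp.2
    nlinarith
  calc Real.exp (K * t₀) / 2 * j
      ≤ (Real.exp (K * t₀) - Real.exp (-(K * R ^ 2))) * energy Ω₀ ψ v δ R t₀ := by
        gcongr <;> linarith [Real.exp_pos (K * t₀)]
    _ ≤ K * (Real.exp (-(K * R ^ 2 / 2)) + (Real.cosh (δ * R))⁻¹ ^ 2)
        * ∫ q in Qset Ω₀ R, u q.1 q.2 ^ 2 := hb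
    _ ≤ K * (Real.exp (-(2 * (δ * R))) + 4 * Real.exp (-(2 * (δ * R))))
        * ∫ q in Qset Ω₀ R, u q.1 q.2 ^ 2 := by gcongr
    _ = _ := by ring
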